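/- arXiv:1410.7727 — 2 statements merged into one kernel-verified Lean document; each statement's English description precedes it below -/
import Mathlib

section
/- The map w ↦ DF(w) from Max (with the subspace topology induced from the product topology on Σ⁺) to the space of nonempty compact subsets of ℝ³ with the Hausdorff metric is continuous, and it is non-decreasing: if w, w' ∈ Max with w ≤ w' in the lexicographic order, then DF(w) ⊆ DF(w'). -/
open Filter Topology MeasureTheory

/-- The sequence space `Σ⁺ = {0,1,2}^ℕ` (with the product topology). -/
abbrev Seq3 := ℕ → Fin 3

/-- The shift map `σ`. -/
def shift (s : Seq3) : Seq3 := fun n => s (n + 1)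

/-- The observable `κ(s) = e_{s₀}`. -/
noncomputable def kappa (s : Seq3) : Fin 3 → ℝ := fun i => if i = s 0 then 1 else 0

/-- The cocycle `κ_σ(s,r) = Σ_{i<r} κ(σⁱ s)`. -/
noncomputable def birk (s : Seq3) (r : ℕ) : Fin 3 → ℝ :=
  ∑ i ∈ Finset.range r, kappa (shift^[i] s)

/-- The Birkhoff digit frequency of `s` exists and equals `v`. -/
def hasFreq (s : Seq3) (v : Fin 3 → ℝ) : Prop :=
  Tendsto (fun r : ℕ => (r : ℝ)⁻¹ • birk s r) atTop (nhds v)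

/-- The lexicographic order on `Σ⁺`. -/
def lexLe (s t : Seq3) : Prop :=
  s = t ∨ ∃ n, (∀ i, i < n → s i = t i) ∧ s n < t n

/-- The set `Max` of maximal sequences. -/
def MaxSet : Set Seq3 := {w | w 0 = 2 ∧ ∀ r : ℕ, lexLe (shift^[r] w) w}

/-- The symbolic β-shift `B(w)`. -/
def BetaShift (w : Seq3) : Set Seq3 := {s | ∀ r : ℕ, lexLe (shift^[r] s) w}

/-- The digit frequency set `DF(w)`. -/
def DF (w : Seq3) : Set (Fin 3 → ℝ) := {v | ∃ s ∈ BetaShift w, hasFreq s v}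

/-- The Misiurewicz–Ziemian digit frequency set `DF_MZ(X)` of a subset `X ⊆ Σ⁺`. -/
def DFMZ (X : Set Seq3) : Set (Fin 3 → ℝ) :=
  {v | ∃ (s : ℕ → Seq3) (r : ℕ → ℕ), (∀ i, s i ∈ X) ∧ Tendsto r atTop atTop ∧
    Tendsto (fun i => (r i : ℝ)⁻¹ • birk (s i) (r i)) atTop (nhds v)}

/-- The standard 2-simplex `Δ ⊆ ℝ³`. -/
def Delta : Set (Fin 3 → ℝ) := {α | (∀ i, 0 ≤ α i) ∧ α 0 + α 1 + α 2 = 1}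

/-- `Δ' = {α ∈ Δ : α₂ > 0}`. -/
def Delta' : Set (Fin 3 → ℝ) := {α | α ∈ Delta ∧ 0 < α 2}

/-- `I` is the infimax sequence of `α`: the infimum, in the lexicographic order, of the
(nonempty) set of maximal sequences with digit frequency `α`; it belongs to `Max`. -/
def IsInfimax (α : Fin 3 → ℝ) (I : Seq3) : Prop :=
  {w | w ∈ MaxSet ∧ hasFreq w α}.Nonempty ∧ I ∈ MaxSet ∧
    (∀ w, w ∈ MaxSet ∧ hasFreq w α → lexLe I w) ∧
    (∀ b : Seq3, (∀ w, w ∈ MaxSet ∧ hasFreq w α → lexLe b w) → lexLe b I)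

/-- The closure of the forward `σ`-orbit of `s` (e.g. `C_α` is `orbitClosure I(α)`). -/
def orbitClosure (s : Seq3) : Set Seq3 := closure {t | ∃ r : ℕ, shift^[r] s = t}

/-- A vector in `ℝ³` is rational if all its coordinates are. -/
def IsRat (v : Fin 3 → ℝ) : Prop := ∀ i, ∃ q : ℚ, v i = (q : ℝ)

/-- A minimal set of a continuous map: a nonempty compact invariant set in which every
point has dense forward orbit. -/
def IsMinimalSet {X : Type*} [TopologicalSpace X] (f : X → X) (C : Set X) : Prop :=
  C.Nonempty ∧ IsCompact C ∧ Set.MapsTo f C C ∧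
    ∀ x ∈ C, C ⊆ closure {y | ∃ n : ℕ, f^[n] x = y}

/-!
Call a finite word full for `w` if each of its nonempty suffixes falls strictly below `w` at some
position inside the word; full words can be concatenated freely without leaving `B(w)`. Suppose
`0 < w 0`. Replacing the last nonzero digit of a length-`N` block of a point of `B(w)` by `0` makes
the block full, and this moves the average of `κ` over the block by at most `1 / N`. Fullness of a
length-`N` word only depends on the first `N` digits of `w`, so every point of `DF(w)` is within
`1 / N` of the set of digit averages of full words for any `v` agreeing with `w` in `N` digits.
Conversely, concatenating full words whose lengths grow slowly enough realises every limit of their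
digit averages as a digit frequency. Hence `DF(v)` is the closure of the set of digit averages of
full words, and `DF(w)`, `DF(v)` are at Hausdorff distance at most `1 / N`. If `w 0 = 0`, then
`B(w)` is the single point `0^∞`.
-/

open Asymptotics

/-- The greatest `n ≤ r` with `f n ≤ r`, a generalised inverse of `f`; it is `0` if there is no such
`n`. -/
def lastIndexLE (f : ℕ → ℕ) (r : ℕ) : ℕ := Nat.findGreatest (fun n => f n ≤ r) r

section LastIndexLE

variable {f : ℕ → ℕ} {n r : ℕ}

theorem apply_lastIndexLE_le (h : f 0 ≤ r) : f (lastIndexLE f r) ≤ r :=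
  Nat.findGreatest_spec (P := fun n => f n ≤ r) r.zero_le h

theorem tendsto_lastIndexLE (f : ℕ → ℕ) : Tendsto (lastIndexLE f) atTop atTop := by
  refine tendsto_atTop.2 fun n => ?_
  filter_upwards [eventually_ge_atTop n, eventually_ge_atTop (f n)] with r hn hfn
  exact Nat.le_findGreatest hn hfn

theorem lt_apply_lastIndexLE_add_one (hf : StrictMono f) : r < f (lastIndexLE f r + 1) := by
  by_contra! h
  exact Nat.findGreatest_is_greatest (Nat.lt_succ_self _) ((hf.id_le _).trans h) h

theorem lastIndexLE_eq (hf : StrictMono f) (h : f n ≤ r) (h' : r < f (n + 1)) :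
    lastIndexLE f r = n := by
  have hle : n ≤ lastIndexLE f r := Nat.le_findGreatest ((hf.id_le n).trans h) h
  have hlt : lastIndexLE f r < n + 1 :=
    hf.lt_iff_lt.1 ((apply_lastIndexLE_le ((hf.monotone n.zero_le).trans h)).trans_lt h')
  omega

end LastIndexLE

theorem exists_tendsto_atTop_comp_isLittleO (m : ℕ → ℕ) :
    ∃ k : ℕ → ℕ, Tendsto k atTop atTop ∧
      (fun n => (m (k n) : ℝ)) =o[atTop] (fun n => (n : ℝ)) := by
  refine ⟨lastIndexLE fun j => j * m j, tendsto_lastIndexLE _, isLittleO_iff.2 fun c hc => ?_⟩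
  filter_upwards [(tendsto_natCast_atTop_atTop.comp
    (tendsto_lastIndexLE fun j => j * m j)).eventually_ge_atTop c⁻¹] with n hn
  set k := lastIndexLE (fun j => j * m j) n
  have hkm : (k : ℝ) * m k ≤ n := by
    exact_mod_cast apply_lastIndexLE_le (f := fun j => j * m j) (by simp : 0 * m 0 ≤ n)
  rw [Real.norm_natCast, Real.norm_natCast]
  calc (m k : ℝ) = c * (c⁻¹ * m k) := by field_simp
    _ ≤ c * (k * m k) := by gcongr; exact hn
    _ ≤ c * n := by gcongr

section Averages

variable {E : Type*} [NormedAddCommGroup E]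

theorem tendsto_inv_smul_iff_isLittleO [NormedSpace ℝ E] {ι : Type*} {l : Filter ι} {f : ι → E}
    {g : ι → ℝ} {v : E} (hg : ∀ᶠ i in l, g i ≠ 0) :
    Tendsto (fun i => (g i)⁻¹ • f i) l (𝓝 v) ↔ (fun i => f i - g i • v) =o[l] g := by
  rw [← isLittleOTVS_iff_isLittleO (𝕜 := ℝ),
    isLittleOTVS_iff_tendsto_inv_smul (hg.mono fun i hi h => absurd h hi),
    ← tendsto_sub_nhds_zero_iff]
  refine tendsto_congr' (hg.mono fun i hi => ?_)
  simp only [smul_sub, inv_smul_smul₀ hi]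

theorem isLittleO_sum_range_of_subseq {u : ℕ → E} {C : ℝ} (hu : ∀ i, ‖u i‖ ≤ C) {T : ℕ → ℕ}
    (hT : StrictMono T)
    (hgap : (fun n => (T (n + 1) : ℝ) - T n) =o[atTop] (fun n => (T n : ℝ)))
    (hsum : (fun n => ∑ i ∈ Finset.range (T n), u i) =o[atTop] (fun n => (T n : ℝ))) :
    (fun r => ∑ i ∈ Finset.range r, u i) =o[atTop] (fun r => (r : ℝ)) := by
  set k := lastIndexLE T
  have hk : Tendsto k atTop atTop := tendsto_lastIndexLE T
  have hTk : ∀ᶠ r in atTop, T (k r) ≤ r :=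
    (eventually_ge_atTop (T 0)).mono fun r hr => apply_lastIndexLE_le hr
  have hTk_bigO : (fun r => (T (k r) : ℝ)) =O[atTop] (fun r => (r : ℝ)) :=
    .of_norm_eventuallyLE (hTk.mono fun r hr => by simpa using hr)
  have htail : (fun r => ∑ i ∈ Finset.Ico (T (k r)) r, u i) =O[atTop]
      (fun r => (T (k r + 1) : ℝ) - T (k r)) := by
    refine .of_bound C (hTk.mono fun r hr => ?_)
    have hrT : (r : ℝ) ≤ T (k r + 1) := by exact_mod_cast (lt_apply_lastIndexLE_add_one hT).le
    calc ‖∑ i ∈ Finset.Ico (T (k r)) r, u i‖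
        ≤ ∑ _i ∈ Finset.Ico (T (k r)) r, C := norm_sum_le_of_le _ fun i _ => hu i
      _ = C * (r - T (k r)) := by simp [Nat.cast_sub hr, mul_comm]
      _ ≤ C * ‖(T (k r + 1) : ℝ) - T (k r)‖ := by
        gcongr
        · exact (norm_nonneg _).trans (hu 0)
        · exact (sub_le_sub_right hrT _).trans (Real.le_norm_self _)
  have hhead : (fun r => ∑ i ∈ Finset.range (T (k r)), u i) =o[atTop] (fun r => (r : ℝ)) :=
    (hsum.comp_tendsto hk).trans_isBigO hTk_bigO
  refine (hhead.add (htail.trans_isLittleO ((hgap.comp_tendsto hk).trans_isBigO hTk_bigO))).congr'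
    (hTk.mono fun r hr => ?_) .rfl
  exact Finset.sum_range_add_sum_Ico u hr

end Averages

/-! ### Concatenation of blocks -/

/-- The position at which the `n`-th of consecutive blocks of lengths `l 0, l 1, …` starts. -/
def blockStart (l : ℕ → ℕ) (n : ℕ) : ℕ := ∑ j ∈ Finset.range n, l j

/-- The infinite concatenation of the words `U 0, U 1, …`, where the word `U n` consists of the
first `l n` letters of a sequence. Meaningful only if all the lengths `l n` are positive. -/
def blockConcat {α : Type*} (l : ℕ → ℕ) (U : ℕ → ℕ → α) (r : ℕ) : α :=
  U (lastIndexLE (blockStart l) r) (r - blockStart l (lastIndexLE (blockStart l) r))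

section BlockConcat

variable {α : Type*} {l : ℕ → ℕ} {U : ℕ → ℕ → α}

theorem blockStart_succ (l : ℕ → ℕ) (n : ℕ) : blockStart l (n + 1) = blockStart l n + l n :=
  Finset.sum_range_succ _ _

theorem blockStart_const (N n : ℕ) : blockStart (fun _ => N) n = n * N := by
  simp [blockStart]

theorem strictMono_blockStart (hl : ∀ n, 0 < l n) : StrictMono (blockStart l) :=
  strictMono_nat_of_lt_succ fun n => by
    rw [blockStart_succ]
    exact Nat.lt_add_of_pos_right (hl n)

theorem exists_eq_blockStart_add (hl : ∀ n, 0 < l n) (r : ℕ) :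
    ∃ n, ∃ i < l n, r = blockStart l n + i := by
  have hle : blockStart l (lastIndexLE (blockStart l) r) ≤ r :=
    apply_lastIndexLE_le (by simp [blockStart])
  have hlt := lt_apply_lastIndexLE_add_one (r := r) (strictMono_blockStart hl)
  rw [blockStart_succ] at hlt
  exact ⟨lastIndexLE (blockStart l) r, r - blockStart l (lastIndexLE (blockStart l) r),
    by omega, by omega⟩

theorem blockConcat_apply (hl : ∀ n, 0 < l n) {n i : ℕ} (hi : i < l n) :
    blockConcat l U (blockStart l n + i) = U n i := by
  have hindex : lastIndexLE (blockStart l) (blockStart l n + i) = n :=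
    lastIndexLE_eq (strictMono_blockStart hl) (Nat.le_add_right _ _)
      (by rw [blockStart_succ]; omega)
  rw [blockConcat, hindex, Nat.add_sub_cancel_left]

end BlockConcat

/-! ### Full words -/

/-- The word `s 0 ⋯ s (n - 1)` is full for `w`: each of its nonempty suffixes is strictly smaller
than the prefix of `w` of the same length, so any continuation of the word stays below `w` when
read from a position inside the word. -/
def IsFullWord {α : Type*} [LT α] (w s : ℕ → α) (n : ℕ) : Prop :=
  ∀ j < n, ∃ k, j + k < n ∧ (∀ i < k, s (j + i) = w i) ∧ s (j + k) < w k

section IsFullWord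

variable {α : Type*} [LT α] {w v s : ℕ → α} {n : ℕ}

theorem IsFullWord.congr_left (hvw : v ∈ PiNat.cylinder w n) (h : IsFullWord w s n) :
    IsFullWord v s n := by
  intro j hj
  obtain ⟨k, hk, heq, hlt⟩ := h j hj
  exact ⟨k, hk, fun i hi => (heq i hi).trans (hvw i (by omega)).symm,
    hlt.trans_eq (hvw k (by omega)).symm⟩

theorem IsFullWord.update_succ {a : α} (ha : a < w 0) (h : IsFullWord w s n) :
    IsFullWord w (Function.update s n a) (n + 1) := by
  intro j hj
  rcases (Nat.lt_succ_iff_lt_or_eq.1 hj) with hjn | rfl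
  · obtain ⟨k, hk, heq, hlt⟩ := h j hjn
    refine ⟨k, by omega, fun i hi => ?_, ?_⟩ <;> rw [Function.update_of_ne (by omega)]
    exacts [heq i hi, hlt]
  · exact ⟨0, by omega, by simp, by simpa using ha⟩

theorem IsFullWord.blockConcat {l : ℕ → ℕ} {U : ℕ → ℕ → α} (hl : ∀ n, 0 < l n)
    (hU : ∀ n, IsFullWord w (U n) (l n)) (n : ℕ) :
    IsFullWord w (blockConcat l U) (blockStart l n) := by
  intro j hj
  obtain ⟨b, i, hi, rfl⟩ := exists_eq_blockStart_add hl j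
  obtain ⟨k, hk, heq, hlt⟩ := hU b i hi
  have hbn : blockStart l b + l b ≤ blockStart l n := by
    rw [← blockStart_succ]
    exact (strictMono_blockStart hl).monotone
      ((strictMono_blockStart hl).lt_iff_lt.1 (by omega : blockStart l b < blockStart l n))
  refine ⟨k, by omega, fun q hq => ?_, ?_⟩ <;> rw [add_assoc, blockConcat_apply hl (by omega)]
  exacts [heq q hq, hlt]

end IsFullWord

/-! ### The lexicographic order and β-shifts -/

theorem shift_iterate_apply (s : Seq3) (r i : ℕ) : (shift^[r] s) i = s (r + i) := by
  induction r generalizing s with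
  | zero => simp
  | succ r ih =>
    rw [Function.iterate_succ_apply, ih, shift]
    congr 1
    omega

theorem lexLe_iff_toLex_le {s t : Seq3} : lexLe s t ↔ toLex s ≤ toLex t := Iff.rfl

theorem lexLe.trans {s t u : Seq3} (hst : lexLe s t) (htu : lexLe t u) : lexLe s u :=
  le_trans (lexLe_iff_toLex_le.1 hst) (lexLe_iff_toLex_le.1 htu)

theorem lexLe.apply_le {s t : Seq3} (h : lexLe s t) {n : ℕ} (heq : ∀ i < n, s i = t i) :
    s n ≤ t n :=
  Pi.apply_le_of_toLex (lexLe_iff_toLex_le.1 h) heq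

theorem shift_iterate_mem_BetaShift {w s : Seq3} (hs : s ∈ BetaShift w) (n : ℕ) :
    shift^[n] s ∈ BetaShift w := fun r => by
  rw [← Function.iterate_add_apply]
  exact hs (r + n)

theorem zero_mem_BetaShift (w : Seq3) : 0 ∈ BetaShift w := fun r => by
  have hzero : shift^[r] (0 : Seq3) = 0 := funext fun i => shift_iterate_apply 0 r i
  rw [hzero, lexLe_iff_toLex_le]
  exact Pi.toLex_monotone fun i => Fin.zero_le (w i)

theorem BetaShift_eq_singleton_zero {w : Seq3} (hw : w 0 = 0) : BetaShift w = {0} := by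
  refine Set.eq_singleton_iff_unique_mem.2 ⟨zero_mem_BetaShift w, fun s hs => funext fun r => ?_⟩
  have hle : (shift^[r] s) 0 ≤ w 0 := (hs r).apply_le (by simp)
  rw [shift_iterate_apply, add_zero, hw] at hle
  exact Fin.le_zero_iff.1 hle

theorem mem_BetaShift_of_isFullWord {w s : Seq3} {T : ℕ → ℕ} (hT : StrictMono T)
    (hs : ∀ n, IsFullWord w s (T n)) : s ∈ BetaShift w := fun r => by
  obtain ⟨k, -, heq, hlt⟩ := hs (r + 1) r (hT.id_le (r + 1))
  refine Or.inr ⟨k, fun i hi => ?_, ?_⟩ <;> rw [shift_iterate_apply]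
  exacts [heq i hi, hlt]

theorem isFullWord_update_zero {w s : Seq3} (hs : s ∈ BetaShift w) {n : ℕ} (hn : s n ≠ 0) :
    IsFullWord w (Function.update s n 0) (n + 1) := by
  intro j hj
  have hjn : j + (n - j) = n := by omega
  by_cases hagree : ∀ i < n - j, s (j + i) = w i
  · refine ⟨n - j, by omega, fun i hi => ?_, ?_⟩
    · rw [Function.update_of_ne (by omega), hagree i hi]
    · have hle : s n ≤ w (n - j) := by
        simpa only [shift_iterate_apply, hjn] using
          (hs j).apply_le (n := n - j) (by simpa only [shift_iterate_apply] using hagree)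
      rw [hjn, Function.update_self]
      exact (Fin.pos_of_ne_zero hn).trans_le hle
  · rcases hs j with heq | ⟨k, heq, hlt⟩
    · exact absurd (fun i _ => by rw [← heq, shift_iterate_apply]) hagree
    · simp only [shift_iterate_apply] at heq hlt
      have hk : k < n - j := by
        by_contra! hle
        exact hagree fun i hi => heq i (by omega)
      refine ⟨k, by omega, fun i hi => ?_, ?_⟩ <;> rw [Function.update_of_ne (by omega)]
      exacts [heq i hi, hlt]

/-! ### Digit averages -/

theorem birk_eq_sum_single (s : Seq3) (n : ℕ) :
    birk s n = ∑ i ∈ Finset.range n, Pi.single (s i) (1 : ℝ) :=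
  Finset.sum_congr rfl fun i _ => funext fun a => by
    rw [kappa, shift_iterate_apply, add_zero, Pi.single_apply]

theorem birk_add (s : Seq3) (n m : ℕ) : birk s (n + m) = birk s n + birk (shift^[n] s) m :=
  birkhoffSum_add shift kappa n m s

theorem birk_congr {s t : Seq3} {n : ℕ} (h : ∀ i < n, s i = t i) : birk s n = birk t n := by
  rw [birk_eq_sum_single, birk_eq_sum_single]
  exact Finset.sum_congr rfl fun i hi => by rw [h i (Finset.mem_range.1 hi)]

theorem birk_update_succ (s : Seq3) (n : ℕ) (a : Fin 3) :
    birk (Function.update s n a) (n + 1) = birk s n + Pi.single a 1 := by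
  rw [birk_eq_sum_single, Finset.sum_range_succ, ← birk_eq_sum_single, Function.update_self,
    birk_congr fun i hi => Function.update_of_ne hi.ne _ _]

theorem birk_blockStart (l : ℕ → ℕ) (s : Seq3) (n : ℕ) :
    birk s (blockStart l n) = ∑ b ∈ Finset.range n, birk (shift^[blockStart l b] s) (l b) := by
  induction n with
  | zero => simp [blockStart, birk]
  | succ n ih => rw [blockStart_succ, birk_add, ih, Finset.sum_range_succ]

theorem birk_blockConcat {l : ℕ → ℕ} (hl : ∀ n, 0 < l n) (U : ℕ → Seq3) (n : ℕ) :
    birk (blockConcat l U) (blockStart l n) = ∑ b ∈ Finset.range n, birk (U b) (l b) := by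
  rw [birk_blockStart]
  refine Finset.sum_congr rfl fun b _ => birk_congr fun i hi => ?_
  rw [shift_iterate_apply, blockConcat_apply hl hi]

theorem norm_single_sub_single_le (a b : Fin 3) :
    ‖(Pi.single a 1 - Pi.single b 1 : Fin 3 → ℝ)‖ ≤ 1 := by
  refine (pi_norm_le_iff_of_nonneg zero_le_one).2 fun i => ?_
  rw [Pi.sub_apply, Pi.single_apply, Pi.single_apply]
  split_ifs <;> simp

theorem norm_inv_smul_birk_le (s : Seq3) (n : ℕ) : ‖(n : ℝ)⁻¹ • birk s n‖ ≤ 1 := by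
  have hbirk : ‖birk s n‖ ≤ n := by
    rw [birk_eq_sum_single]
    calc ‖∑ i ∈ Finset.range n, (Pi.single (s i) 1 : Fin 3 → ℝ)‖
        ≤ ∑ i ∈ Finset.range n, ‖(Pi.single (s i) 1 : Fin 3 → ℝ)‖ := norm_sum_le _ _
      _ = n := by simp [Pi.norm_single]
  rw [norm_smul, norm_inv, Real.norm_natCast]
  exact (mul_le_mul_of_nonneg_left hbirk (by positivity)).trans inv_mul_le_one

theorem hasFreq_iff_isLittleO {s : Seq3} {v : Fin 3 → ℝ} :
    hasFreq s v ↔ (fun r : ℕ => birk s r - (r : ℝ) • v) =o[atTop] (fun r : ℕ => (r : ℝ)) :=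
  tendsto_inv_smul_iff_isLittleO
    ((eventually_ne_atTop 0).mono fun _ hr => Nat.cast_ne_zero.2 hr)

theorem hasFreq_zero : hasFreq 0 (Pi.single 0 1) := by
  have hbirk : ∀ r : ℕ, birk 0 r = (r : ℝ) • Pi.single 0 1 := fun r => by
    rw [birk_eq_sum_single]
    simp [Nat.cast_smul_eq_nsmul]
  simp [hasFreq_iff_isLittleO, hbirk]

theorem hasFreq_of_subseq {s : Seq3} {v : Fin 3 → ℝ} {T : ℕ → ℕ} (hT : StrictMono T)
    (hgap : (fun n => (T (n + 1) : ℝ) - T n) =o[atTop] (fun n => (T n : ℝ)))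
    (hsub : (fun n => birk s (T n) - (T n : ℝ) • v) =o[atTop] (fun n => (T n : ℝ))) :
    hasFreq s v := by
  have hsum : ∀ r : ℕ, birk s r - (r : ℝ) • v =
      ∑ i ∈ Finset.range r, (Pi.single (s i) 1 - v) := fun r => by
    rw [birk_eq_sum_single, Finset.sum_sub_distrib, Finset.sum_const, Finset.card_range,
      Nat.cast_smul_eq_nsmul]
  have hbound : ∀ i, ‖Pi.single (s i) (1 : ℝ) - v‖ ≤ 1 + ‖v‖ := fun i => by
    simpa [Pi.norm_single] using norm_sub_le (Pi.single (s i) (1 : ℝ)) v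
  simp only [hasFreq_iff_isLittleO, hsum] at hsub ⊢
  exact isLittleO_sum_range_of_subseq hbound hT hgap hsub

theorem hasFreq_blockConcat {l : ℕ → ℕ} (hl : ∀ n, 0 < l n) {U : ℕ → Seq3} {v : Fin 3 → ℝ}
    (hlen : (fun n => (l n : ℝ)) =o[atTop] (fun n => (blockStart l n : ℝ)))
    (hU : Tendsto (fun n => (l n : ℝ)⁻¹ • birk (U n) (l n)) atTop (𝓝 v)) :
    hasFreq (blockConcat l U) v := by
  have hmono := strictMono_blockStart hl
  have hstart : ∀ n, (blockStart l n : ℝ) = ∑ b ∈ Finset.range n, (l b : ℝ) := fun n =>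
    Nat.cast_sum _ _
  have htop : Tendsto (fun n => ∑ b ∈ Finset.range n, (l b : ℝ)) atTop atTop := by
    simp only [← hstart]
    exact tendsto_natCast_atTop_atTop.comp hmono.tendsto_atTop
  have hblock : (fun n => birk (U n) (l n) - (l n : ℝ) • v) =o[atTop] (fun n => (l n : ℝ)) :=
    (tendsto_inv_smul_iff_isLittleO (.of_forall fun n => Nat.cast_ne_zero.2 (hl n).ne')).1 hU
  refine hasFreq_of_subseq hmono (hlen.congr_left fun n => ?_) ?_
  · rw [blockStart_succ, Nat.cast_add, add_sub_cancel_left]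
  · simpa only [birk_blockConcat hl, hstart, Finset.sum_smul, Finset.sum_sub_distrib]
      using hblock.sum_range (fun n => Nat.cast_nonneg _) htop

theorem exists_isFullWord_norm_birk_sub_le {w s : Seq3} (hw : 0 < w 0) (hs : s ∈ BetaShift w)
    (n : ℕ) : ∃ t, IsFullWord w t n ∧ ‖birk t n - birk s n‖ ≤ 1 := by
  induction n with
  | zero => exact ⟨s, fun j hj => absurd hj j.not_lt_zero, by simp⟩
  | succ n ih =>
    have hbirk : birk s (n + 1) = birk s n + Pi.single (s n) 1 := by
      rw [← birk_update_succ, Function.update_eq_self]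
    by_cases hn : s n = 0
    · obtain ⟨t, ht, hdist⟩ := ih
      refine ⟨Function.update t n 0, ht.update_succ hw, ?_⟩
      rwa [birk_update_succ, hbirk, hn, add_sub_add_right_eq_sub]
    · refine ⟨Function.update s n 0, isFullWord_update_zero hs hn, ?_⟩
      rw [birk_update_succ, hbirk, add_sub_add_left_eq_sub]
      exact norm_single_sub_single_le 0 (s n)

/-- The digit averages of the nonempty full words for `w`; their closure is `DF w` if
`0 < w 0`. -/
def fullWordFreqs (w : Seq3) : Set (Fin 3 → ℝ) :=
  {x | ∃ s n, 0 < n ∧ IsFullWord w s n ∧ (n : ℝ)⁻¹ • birk s n = x}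

theorem fullWordFreqs_nonempty {w : Seq3} (hw : 0 < w 0) : (fullWordFreqs w).Nonempty := by
  obtain ⟨t, ht, -⟩ := exists_isFullWord_norm_birk_sub_le hw (zero_mem_BetaShift w) 1
  exact ⟨_, t, 1, one_pos, ht, rfl⟩

section Approximation

variable {w v s : Seq3} {N : ℕ}

theorem exists_mem_fullWordFreqs_dist_le (hw : 0 < w 0) (hN : 0 < N)
    (hvw : v ∈ PiNat.cylinder w N) (hs : s ∈ BetaShift w) {n : ℕ} (hn : 0 < n) :
    ∃ y ∈ fullWordFreqs v, dist (((n * N : ℕ) : ℝ)⁻¹ • birk s (n * N)) y ≤ (N : ℝ)⁻¹ := by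
  choose t ht hdist using fun b => exists_isFullWord_norm_birk_sub_le hw
    (shift_iterate_mem_BetaShift hs (blockStart (fun _ => N) b)) N
  have hfull := IsFullWord.blockConcat (fun _ => hN) (fun b => (ht b).congr_left hvw) n
  have hsum : ‖birk (blockConcat (fun _ => N) t) (n * N) - birk s (n * N)‖ ≤ n := by
    rw [← blockStart_const, birk_blockConcat fun _ => hN, birk_blockStart,
      ← Finset.sum_sub_distrib]
    exact (norm_sum_le_of_le _ fun b _ => hdist b).trans (by simp)
  rw [blockStart_const] at hfull
  refine ⟨_, ⟨_, n * N, Nat.mul_pos hn hN, hfull, rfl⟩, ?_⟩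
  rw [dist_comm, dist_eq_norm, ← smul_sub, norm_smul, norm_inv, Real.norm_natCast]
  calc ((n * N : ℕ) : ℝ)⁻¹ * ‖birk (blockConcat (fun _ => N) t) (n * N) - birk s (n * N)‖
      ≤ ((n * N : ℕ) : ℝ)⁻¹ * n := by gcongr
    _ = (N : ℝ)⁻¹ := by
      push_cast
      field_simp

theorem infDist_fullWordFreqs_le (hw : 0 < w 0) (hN : 0 < N) (hvw : v ∈ PiNat.cylinder w N)
    {x : Fin 3 → ℝ} (hx : x ∈ DF w) : Metric.infDist x (fullWordFreqs v) ≤ (N : ℝ)⁻¹ := by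
  obtain ⟨s, hs, hfreq⟩ := hx
  have hmul : Tendsto (fun n => n * N) atTop atTop := tendsto_id.atTop_mul_const' hN
  refine le_of_tendsto ((Metric.continuous_infDist_pt _).continuousAt.tendsto.comp
    (hfreq.comp hmul)) ?_
  filter_upwards [eventually_gt_atTop 0] with n hn
  obtain ⟨y, hy, hdist⟩ := exists_mem_fullWordFreqs_dist_le hw hN hvw hs hn
  exact (Metric.infDist_le_dist_of_mem hy).trans hdist

end Approximation

/-! ### Digit frequency sets -/

theorem DF_mono {w w' : Seq3} (h : lexLe w w') : DF w ⊆ DF w' := by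
  rintro v ⟨s, hs, hfreq⟩
  exact ⟨s, fun r => (hs r).trans h, hfreq⟩

theorem DF_nonempty (w : Seq3) : (DF w).Nonempty :=
  ⟨_, 0, zero_mem_BetaShift w, hasFreq_zero⟩

theorem DF_subset_closedBall (w : Seq3) : DF w ⊆ Metric.closedBall 0 1 := by
  rintro v ⟨s, -, hfreq⟩
  exact mem_closedBall_zero_iff.2
    (le_of_tendsto hfreq.norm (.of_forall fun r => norm_inv_smul_birk_le s r))

theorem DF_eq_singleton {w : Seq3} (hw : w 0 = 0) : DF w = {Pi.single 0 1} := by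
  refine (DF_nonempty w).subset_singleton_iff.1 ?_
  rintro v ⟨s, hs, hfreq⟩
  rw [BetaShift_eq_singleton_zero hw] at hs
  subst hs
  exact tendsto_nhds_unique hfreq hasFreq_zero

theorem DF_subset_closure_fullWordFreqs {w : Seq3} (hw : 0 < w 0) :
    DF w ⊆ closure (fullWordFreqs w) := fun x hx => by
  rw [Metric.mem_closure_iff_infDist_zero (fullWordFreqs_nonempty hw)]
  refine le_antisymm (ge_of_tendsto tendsto_inv_atTop_nhds_zero_nat ?_) Metric.infDist_nonneg
  filter_upwards [eventually_gt_atTop 0] with N hN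
  exact infDist_fullWordFreqs_le hw hN (PiNat.self_mem_cylinder w N) hx

theorem closure_fullWordFreqs_subset_DF (w : Seq3) : closure (fullWordFreqs w) ⊆ DF w := by
  intro v hv
  obtain ⟨x, hx, hxv⟩ := mem_closure_iff_seq_limit.1 hv
  choose U m hm hU hxU using hx
  obtain ⟨k, hk, hmk⟩ := exists_tendsto_atTop_comp_isLittleO m
  have hl : ∀ n, 0 < m (k n) := fun n => hm (k n)
  have hmono := strictMono_blockStart hl
  refine ⟨blockConcat (fun n => m (k n)) fun n => U (k n),
    mem_BetaShift_of_isFullWord hmono (.blockConcat hl fun n => hU (k n)),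
    hasFreq_blockConcat hl (hmk.trans_le fun n => ?_) ?_⟩
  · rw [Real.norm_natCast, Real.norm_natCast]
    exact_mod_cast hmono.id_le n
  · simp only [hxU]
    exact hxv.comp hk

theorem DF_eq_closure_fullWordFreqs {w : Seq3} (hw : 0 < w 0) :
    DF w = closure (fullWordFreqs w) :=
  (DF_subset_closure_fullWordFreqs hw).antisymm (closure_fullWordFreqs_subset_DF w)

theorem isCompact_DF (w : Seq3) : IsCompact (DF w) := by
  refine Metric.isCompact_of_isClosed_isBounded ?_
    (Metric.isBounded_closedBall.subset (DF_subset_closedBall w))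
  rcases eq_or_ne (w 0) 0 with hw | hw
  · rw [DF_eq_singleton hw]
    exact isClosed_singleton
  · rw [DF_eq_closure_fullWordFreqs (Fin.pos_of_ne_zero hw)]
    exact isClosed_closure

theorem hausdorffDist_DF_le {w v : Seq3} {N : ℕ} (hN : 0 < N) (hvw : v ∈ PiNat.cylinder w N) :
    Metric.hausdorffDist (DF w) (DF v) ≤ (N : ℝ)⁻¹ := by
  have hv0 : v 0 = w 0 := hvw 0 hN
  rcases eq_or_ne (w 0) 0 with hw | hw
  · rw [DF_eq_singleton hw, DF_eq_singleton (hv0.trans hw), Metric.hausdorffDist_self_zero]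
    positivity
  · replace hw : 0 < w 0 := Fin.pos_of_ne_zero hw
    have hv : 0 < v 0 := hw.trans_eq hv0.symm
    refine Metric.hausdorffDist_le_of_infDist (by positivity) (fun x hx => ?_) (fun x hx => ?_)
    · rw [DF_eq_closure_fullWordFreqs hv, Metric.infDist_closure]
      exact infDist_fullWordFreqs_le hw hN hvw hx
    · rw [DF_eq_closure_fullWordFreqs hw, Metric.infDist_closure]
      exact infDist_fullWordFreqs_le hv hN ((PiNat.mem_cylinder_comm _ _ _).1 hvw) hx

/-- The digit frequency set `DF w` as a point of the Hausdorff metric space of nonempty compact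
subsets of `ℝ³`. -/
def compactDF (w : Seq3) : TopologicalSpace.NonemptyCompacts (Fin 3 → ℝ) where
  carrier := DF w
  isCompact' := isCompact_DF w
  nonempty' := DF_nonempty w

theorem continuous_compactDF : Continuous compactDF := by
  refine continuous_iff_continuousAt.2 fun w => Metric.tendsto_nhds.2 fun ε hε => ?_
  obtain ⟨N, hN⟩ := exists_nat_one_div_lt hε
  filter_upwards [(PiNat.isOpen_cylinder _ w (N + 1)).mem_nhds (PiNat.self_mem_cylinder w _)]
    with v hv
  calc dist (compactDF v) (compactDF w) = Metric.hausdorffDist (DF w) (DF v) := dist_comm _ _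
    _ ≤ ((N + 1 : ℕ) : ℝ)⁻¹ := hausdorffDist_DF_le N.succ_pos hv
    _ < ε := by simpa using hN

theorem stmt7_general :
    (∃ F : Seq3 → TopologicalSpace.NonemptyCompacts (Fin 3 → ℝ),
      (∀ w, (F w : Set (Fin 3 → ℝ)) = DF w) ∧ Continuous F) ∧
    ∀ w w' : Seq3, lexLe w w' → DF w ⊆ DF w' :=
  ⟨⟨compactDF, fun _ => rfl, continuous_compactDF⟩, fun _ _ => DF_mono⟩

/-- The map `w ↦ DF(w)` from `Max` to the space of nonempty compact
subsets of `ℝ³` with the Hausdorff metric is continuous, and it is non-decreasing with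
respect to the lexicographic order. -/
theorem stmt7 :
    (∃ F : {w : Seq3 // w ∈ MaxSet} → TopologicalSpace.NonemptyCompacts (Fin 3 → ℝ),
      (∀ w, (F w : Set (Fin 3 → ℝ)) = DF w.1) ∧ Continuous F) ∧
    ∀ w w' : Seq3, w ∈ MaxSet → w' ∈ MaxSet → lexLe w w' → DF w ⊆ DF w' := by
  obtain ⟨⟨F, hF, hcont⟩, hmono⟩ := stmt7_general
  exact ⟨⟨fun w => F w, fun w => hF w, hcont.comp continuous_subtype_val⟩,
    fun w w' _ _ => hmono w w'⟩
end

section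
/- For every w ∈ Max, exactly one of the following three alternatives holds for Λ = DF(w). (1) Λ is the convex hull of a finite subset of ℚ³. (2) The set E of extreme points of Λ is infinite; E has exactly one accumulation point v; v ∈ E and v ∉ ℚ³; and every point of E ∖ {v} lies in ℚ³ and is a polygonal vertex of Λ. (3) The set E of extreme points of Λ is infinite; E has exactly two accumulation points v₁ ≠ v₂; v₁, v₂ ∈ E and v₁, v₂ ∉ ℚ³; every point of E ∖ {v₁, v₂} lies in ℚ³ and is a polygonal vertex of Λ; and the line segment from v₁ to v₂ is contained in the topological boundary of Λ (relative to the plane containing Δ). -/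
open Filter Topology MeasureTheory

/-- `v` is a polygonal vertex of `Λ`: near `v`, `Λ` agrees with the convex hull of `v`
and two points `a, b ∈ Λ`. -/
def IsPolygonalVertex (Λ : Set (Fin 3 → ℝ)) (v : Fin 3 → ℝ) : Prop :=
  ∃ U ∈ nhds v, ∃ a ∈ Λ, ∃ b ∈ Λ, Λ ∩ U = convexHull ℝ {v, a, b} ∩ U

/-!
If `w 0 = 2`, then `DF w` is the closure of the digit frequencies of the finite words all of whose
suffixes are smaller than `w`: prefixes of sequences in the β-shift become such words after one
letter is decremented, and conversely concatenations of slowly growing words realize every limit.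

If `2 0ⁿ⁺¹` is smaller than `w`, with `n` least, then such a word is, up to superfluous zeros, the
image of an admissible word for a derived cut under the substitution `0 ↦ 1`, `1 ↦ 2 0ⁿ⁺¹`,
`2 ↦ 2 0ⁿ`. Iteration produces exponents `n 0, n 1, …`. If the process stops, or if the exponents
are eventually zero, then `DF w` is a rational polygon. Otherwise its extreme points are among the
normalized images of `e₀` under the products of the abelianized substitutions and their limits.
These vertices turn alternately left and right around `e₀`, so those of even index converge
and so do those of odd index, and the two limits are the endpoints of a (possibly degenerate) face.
No point of this face is rational: its coordinates along the images of `e₂` are positive and tend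
to zero, whereas those of a rational point have a common denominator.
-/

namespace DigitFrequency

section Convexity

variable {E : Type*} [AddCommGroup E] [Module ℝ E]

theorem left_mem_extremePoints_segment (a b : E) : a ∈ (segment ℝ a b).extremePoints ℝ := by
  refine mem_extremePoints_iff_left.2 ⟨left_mem_segment ℝ a b, ?_⟩
  rw [segment_eq_image']
  rintro _ ⟨s, hs, rfl⟩ _ ⟨t, ht, rfl⟩ ⟨p, q, hp, hq, hpq, h⟩
  have hzero : (p * s + q * t) • (b - a) = 0 := by
    calc (p * s + q * t) • (b - a)
        = p • (a + s • (b - a)) + q • (a + t • (b - a)) - (p + q) • a := by module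
      _ = 0 := by rw [h, hpq, one_smul, sub_self]
  rcases smul_eq_zero.1 hzero with hst | hba
  · have hs0 : s = 0 := by
      have hps : p * s = 0 := by linarith [mul_nonneg hp.le hs.1, mul_nonneg hq.le ht.1]
      exact (mul_eq_zero.1 hps).resolve_left hp.ne'
    simp [hs0]
  · simp [hba]

theorem extremePoints_segment (a b : E) : (segment ℝ a b).extremePoints ℝ = {a, b} := by
  refine Set.Subset.antisymm ?_ ?_
  · rw [← convexHull_pair]
    exact extremePoints_convexHull_subset
  · rintro x (rfl | rfl)
    · exact left_mem_extremePoints_segment x b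
    · exact segment_symm ℝ a x ▸ left_mem_extremePoints_segment x a

variable [TopologicalSpace E] [IsTopologicalAddGroup E] [ContinuousSMul ℝ E]

theorem exists_mem_openSegment_of_mem_intrinsicInterior {A : Set E} {x y : E}
    (hx : x ∈ intrinsicInterior ℝ A) (hy : y ∈ A) : ∃ z ∈ A, x ∈ openSegment ℝ y z := by
  have hxA : x ∈ A := intrinsicInterior_subset hx
  obtain ⟨x', hx', rfl⟩ := mem_intrinsicInterior.1 hx
  let ray : ℝ → affineSpan ℝ A := fun t =>
    ⟨AffineMap.lineMap y x' t, AffineMap.lineMap_mem t (subset_affineSpan ℝ A hy) x'.2⟩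
  have hray : Continuous ray := Continuous.subtype_mk AffineMap.lineMap_continuous _
  have hray_one : ray 1 = x' := Subtype.ext (AffineMap.lineMap_apply_one _ _)
  have hmem : ∀ᶠ t in 𝓝 (1 : ℝ), (ray t : E) ∈ A := by
    have hnhds : ((↑) ⁻¹' A : Set (affineSpan ℝ A)) ∈ 𝓝 (ray 1) :=
      hray_one ▸ mem_interior_iff_mem_nhds.1 hx'
    exact hray.continuousAt.eventually hnhds
  obtain ⟨t, htA, ht : 1 < t⟩ :=
    ((hmem.filter_mono nhdsWithin_le_nhds).and (self_mem_nhdsWithin (s := Set.Ioi 1))).exists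
  refine ⟨ray t, htA, ?_⟩
  rw [openSegment_eq_image_lineMap]
  refine ⟨t⁻¹, ⟨inv_pos.2 (by linarith), inv_lt_one_of_one_lt₀ ht⟩, ?_⟩
  rw [AffineMap.lineMap_lineMap_right, inv_mul_cancel₀ (by linarith), AffineMap.lineMap_apply_one]

theorem subset_intrinsicFrontier_of_isExtreme {A B : Set E} (hB : IsExtreme ℝ A B)
    (hA : (A \ B).Nonempty) : B ⊆ intrinsicFrontier ℝ A := by
  intro x hx
  obtain ⟨y, hyA, hyB⟩ := hA
  rw [← intrinsicClosure_sdiff_intrinsicInterior]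
  refine ⟨subset_intrinsicClosure (hB.1 hx), fun hint => ?_⟩
  obtain ⟨z, hz, hxyz⟩ := exists_mem_openSegment_of_mem_intrinsicInterior hint hyA
  exact hyB (hB.2 hyA hz hx hxyz)

end Convexity

section CoordSum

/-- The functional `x ↦ x₀ + x₁ + x₂`; frequency vectors lie in the plane where it equals `1`. -/
def coordSum : (Fin 3 → ℝ) →ₗ[ℝ] ℝ := ∑ i, LinearMap.proj i

theorem coordSum_apply (x : Fin 3 → ℝ) : coordSum x = x 0 + x 1 + x 2 := by
  simp [coordSum, Fin.sum_univ_three]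

theorem le_coordSum {x : Fin 3 → ℝ} (hx : 0 ≤ x) (i : Fin 3) : x i ≤ coordSum x := by
  rw [coordSum, LinearMap.sum_apply]
  exact Finset.single_le_sum (f := fun j => x j) (fun j _ => hx j) (Finset.mem_univ i)

/-- The central projection of `x` to the plane `coordSum = 1`; only meaningful if
`coordSum x ≠ 0`. -/
noncomputable def normalize (x : Fin 3 → ℝ) : Fin 3 → ℝ := (coordSum x)⁻¹ • x

theorem coordSum_normalize {x : Fin 3 → ℝ} (hx : coordSum x ≠ 0) : coordSum (normalize x) = 1 := by
  rw [normalize, map_smul, smul_eq_mul, inv_mul_cancel₀ hx]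

theorem coordSum_smul_normalize {x : Fin 3 → ℝ} (hx : coordSum x ≠ 0) :
    coordSum x • normalize x = x := by
  rw [normalize, smul_inv_smul₀ hx]

theorem normalize_smul {c : ℝ} (hc : c ≠ 0) (x : Fin 3 → ℝ) : normalize (c • x) = normalize x := by
  rw [normalize, map_smul, smul_eq_mul, smul_smul, mul_inv_rev, inv_mul_cancel_right₀ hc, normalize]

theorem normalize_of_coordSum_eq_one {x : Fin 3 → ℝ} (hx : coordSum x = 1) : normalize x = x := by
  rw [normalize, hx, inv_one, one_smul]

theorem normalize_add_mem_openSegment {u v : Fin 3 → ℝ} (hu : 0 < coordSum u)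
    (hv : 0 < coordSum v) : normalize (u + v) ∈ openSegment ℝ (normalize u) (normalize v) := by
  have hs : coordSum (u + v) = coordSum u + coordSum v := map_add _ _ _
  refine ⟨coordSum u / coordSum (u + v), coordSum v / coordSum (u + v), ?_, ?_, ?_, ?_⟩
  · rw [hs]; positivity
  · rw [hs]; positivity
  · rw [← add_div, hs, div_self (by positivity)]
  · rw [div_eq_inv_mul, div_eq_inv_mul, mul_smul, mul_smul, coordSum_smul_normalize hu.ne',
      coordSum_smul_normalize hv.ne', ← smul_add, normalize]

theorem mem_of_eq_conicCombination {C : Set (Fin 3 → ℝ)} (hC : Convex ℝ C) {u v w x : Fin 3 → ℝ}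
    (hu : 0 < coordSum u) (hv : 0 < coordSum v) (hw : 0 < coordSum w)
    (huC : normalize u ∈ C) (hvC : normalize v ∈ C) (hwC : normalize w ∈ C) {a b c : ℝ}
    (ha : 0 ≤ a) (hb : 0 ≤ b) (hc : 0 ≤ c) (hx : x = a • u + b • v + c • w)
    (hsum : coordSum x = 1) : x ∈ C := by
  have hweights : a * coordSum u + b * coordSum v + c * coordSum w = 1 := by simpa [hx] using hsum
  have hmem := hC.sum_mem (t := Finset.univ)
    (w := ![a * coordSum u, b * coordSum v, c * coordSum w])
    (z := ![normalize u, normalize v, normalize w])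
    (by
      intro i _
      fin_cases i
      exacts [mul_nonneg ha hu.le, mul_nonneg hb hv.le, mul_nonneg hc hw.le])
    (by simpa [Fin.sum_univ_three] using hweights)
    (by intro i _; fin_cases i <;> simpa)
  simpa [hx, Fin.sum_univ_three, mul_smul, coordSum_smul_normalize, hu.ne', hv.ne', hw.ne']
    using hmem

end CoordSum

section AbelSubst

/-- The abelianization of the substitution `0 ↦ 1`, `1 ↦ 2 0ⁿ⁺¹`, `2 ↦ 2 0ⁿ`: it maps the digit
count vector of a word to that of its image. -/
def abelSubst (n : ℕ) : (Fin 3 → ℝ) ≃ₗ[ℝ] (Fin 3 → ℝ) where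
  toFun x := ![(n + 1) * x 1 + n * x 2, x 0, x 1 + x 2]
  invFun x := ![x 1, x 0 - n * x 2, x 2 - (x 0 - n * x 2)]
  map_add' x y := by ext i; fin_cases i <;> simp <;> ring
  map_smul' c x := by ext i; fin_cases i <;> simp <;> ring
  left_inv x := by ext i; fin_cases i <;> simp <;> ring
  right_inv x := by ext i; fin_cases i <;> simp; ring

theorem abelSubst_apply (n : ℕ) (x : Fin 3 → ℝ) :
    abelSubst n x = ![(n + 1) * x 1 + n * x 2, x 0, x 1 + x 2] := rfl

theorem abelSubst_symm_apply (n : ℕ) (x : Fin 3 → ℝ) :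
    (abelSubst n).symm x = ![x 1, x 0 - n * x 2, x 2 - (x 0 - n * x 2)] := rfl

/-- The composition `abelSubst (n 0) ∘ ⋯ ∘ abelSubst (n (k - 1))`. -/
def abelSubstIter (n : ℕ → ℕ) : ℕ → (Fin 3 → ℝ) ≃ₗ[ℝ] (Fin 3 → ℝ)
  | 0 => LinearEquiv.refl ℝ _
  | k + 1 => (abelSubst (n k)).trans (abelSubstIter n k)

theorem abelSubstIter_succ_apply (n : ℕ → ℕ) (k : ℕ) (x : Fin 3 → ℝ) :
    abelSubstIter n (k + 1) x = abelSubstIter n k (abelSubst (n k) x) := rfl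

theorem abelSubstIter_succ_symm_apply (n : ℕ → ℕ) (k : ℕ) (x : Fin 3 → ℝ) :
    (abelSubstIter n (k + 1)).symm x = (abelSubst (n k)).symm ((abelSubstIter n k).symm x) := rfl

/-- The image of the basis vector `e₀` under `abelSubstIter n k`. It spans the ray through the
`k`-th vertex; the image of `e₁` is `betaVec n (k + 1)`. -/
def betaVec (n : ℕ → ℕ) (k : ℕ) : Fin 3 → ℝ := abelSubstIter n k ![1, 0, 0]

/-- The image of the basis vector `e₂` under `abelSubstIter n k`. -/
def gammaVec (n : ℕ → ℕ) (k : ℕ) : Fin 3 → ℝ := abelSubstIter n k ![0, 0, 1]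

/-- The coordinate along `betaVec n k` in the basis `betaVec n k, betaVec n (k + 1), gammaVec n k`.
In the preceding basis, if there is one, it is also the coordinate along `betaVec n k`. -/
def betaCoord (n : ℕ → ℕ) (k : ℕ) : (Fin 3 → ℝ) →ₗ[ℝ] ℝ :=
  LinearMap.proj 0 ∘ₗ ((abelSubstIter n k).symm : (Fin 3 → ℝ) →ₗ[ℝ] (Fin 3 → ℝ))

/-- The coordinate along `gammaVec n k` in the basis
`betaVec n k, betaVec n (k + 1), gammaVec n k`. -/
def gammaCoord (n : ℕ → ℕ) (k : ℕ) : (Fin 3 → ℝ) →ₗ[ℝ] ℝ :=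
  LinearMap.proj 2 ∘ₗ ((abelSubstIter n k).symm : (Fin 3 → ℝ) →ₗ[ℝ] (Fin 3 → ℝ))

variable (n : ℕ → ℕ) (k : ℕ)

theorem betaVec_zero : betaVec n 0 = ![1, 0, 0] := rfl

theorem gammaVec_zero : gammaVec n 0 = ![0, 0, 1] := rfl

theorem betaVec_succ : betaVec n (k + 1) = abelSubstIter n k ![0, 1, 0] := by
  rw [betaVec, abelSubstIter_succ_apply, abelSubst_apply]
  simp

theorem betaVec_one : betaVec n 1 = ![0, 1, 0] := betaVec_succ n 0

theorem gammaVec_succ : gammaVec n (k + 1) = gammaVec n k + (n k : ℝ) • betaVec n k := by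
  rw [gammaVec, gammaVec, betaVec, abelSubstIter_succ_apply, abelSubst_apply, ← map_smul,
    ← map_add]
  simp

theorem betaVec_add_two : betaVec n (k + 2) = betaVec n k + gammaVec n (k + 1) := by
  rw [betaVec_succ, betaVec, gammaVec, abelSubstIter_succ_apply, abelSubstIter_succ_apply,
    ← map_add, abelSubst_apply, abelSubst_apply]
  simp [add_comm]

variable (x : Fin 3 → ℝ)

theorem betaCoord_apply : betaCoord n k x = (abelSubstIter n k).symm x 0 := rfl

theorem gammaCoord_apply : gammaCoord n k x = (abelSubstIter n k).symm x 2 := rfl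

theorem betaCoord_succ : betaCoord n (k + 1) x = (abelSubstIter n k).symm x 1 := rfl

theorem betaCoord_add_two :
    betaCoord n (k + 2) x = betaCoord n k x - n k * gammaCoord n k x := rfl

theorem gammaCoord_succ :
    gammaCoord n (k + 1) x = gammaCoord n k x - betaCoord n (k + 2) x := rfl

theorem eq_betaCoord_smul_add : x = betaCoord n k x • betaVec n k +
    betaCoord n (k + 1) x • betaVec n (k + 1) + gammaCoord n k x • gammaVec n k := by
  apply (abelSubstIter n k).symm.injective
  rw [betaVec_succ, betaVec, gammaVec]
  simp only [map_add, map_smul, LinearEquiv.symm_apply_apply]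
  ext i
  fin_cases i <;> simp [betaCoord_apply n k, betaCoord_succ, gammaCoord_apply]

theorem betaCoord_betaVec_self : betaCoord n k (betaVec n k) = 1 := by
  simp [betaCoord_apply, betaVec]

theorem betaCoord_succ_betaVec : betaCoord n (k + 1) (betaVec n k) = 0 := by
  simp [betaCoord_succ, betaVec]

theorem gammaCoord_betaVec_self : gammaCoord n k (betaVec n k) = 0 := by
  simp [gammaCoord_apply, betaVec]

theorem continuous_betaCoord : Continuous (betaCoord n k) :=
  LinearMap.continuous_of_finiteDimensional _

theorem continuous_gammaCoord : Continuous (gammaCoord n k) :=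
  LinearMap.continuous_of_finiteDimensional _

theorem abelSubst_nonneg {n : ℕ} {x : Fin 3 → ℝ} (hx : 0 ≤ x) : 0 ≤ abelSubst n x := by
  intro i
  fin_cases i
  exacts [add_nonneg (mul_nonneg (by positivity) (hx 1)) (mul_nonneg (by positivity) (hx 2)), hx 0,
    add_nonneg (hx 1) (hx 2)]

theorem abelSubstIter_symm_nonneg_of_le {n : ℕ → ℕ} {x : Fin 3 → ℝ} {j k : ℕ} (hjk : j ≤ k)
    (hx : 0 ≤ (abelSubstIter n k).symm x) : 0 ≤ (abelSubstIter n j).symm x := by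
  induction k, hjk using Nat.le_induction with
  | base => exact hx
  | succ k _ ih =>
    rw [abelSubstIter_succ_symm_apply] at hx
    simpa using ih (by simpa using abelSubst_nonneg (n := n k) hx)

theorem abelSubstIter_nonneg {x : Fin 3 → ℝ} (hx : 0 ≤ x) : 0 ≤ abelSubstIter n k x :=
  abelSubstIter_symm_nonneg_of_le (n := n) k.zero_le (by simpa using hx)

theorem betaVec_nonneg : 0 ≤ betaVec n k :=
  abelSubstIter_nonneg n k fun i => by fin_cases i <;> simp

theorem gammaVec_nonneg : 0 ≤ gammaVec n k :=
  abelSubstIter_nonneg n k fun i => by fin_cases i <;> simp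

theorem one_le_gammaVec_two : 1 ≤ gammaVec n k 2 := by
  induction k with
  | zero => simp [gammaVec_zero]
  | succ k ih =>
    calc 1 ≤ gammaVec n k 2 := ih
      _ ≤ gammaVec n k 2 + n k * betaVec n k 2 :=
        le_add_of_nonneg_right (mul_nonneg (Nat.cast_nonneg _) (betaVec_nonneg n k 2))
      _ = gammaVec n (k + 1) 2 := by rw [gammaVec_succ]; rfl

theorem one_le_betaVec_add_two_two : 1 ≤ betaVec n (k + 2) 2 := by
  rw [betaVec_add_two]
  exact le_add_of_nonneg_of_le (betaVec_nonneg n k 2) (one_le_gammaVec_two n (k + 1))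

theorem one_le_coordSum_gammaVec : 1 ≤ coordSum (gammaVec n k) :=
  (one_le_gammaVec_two n k).trans (le_coordSum (gammaVec_nonneg n k) 2)

theorem coordSum_betaVec_add_one_le :
    coordSum (betaVec n k) + 1 ≤ coordSum (betaVec n (k + 2)) := by
  rw [betaVec_add_two, map_add]
  gcongr
  exact one_le_coordSum_gammaVec n (k + 1)

theorem one_le_coordSum_betaVec (n : ℕ → ℕ) : ∀ k, 1 ≤ coordSum (betaVec n k)
  | 0 => by simp [betaVec_zero, coordSum_apply]
  | 1 => by simp [betaVec_one, coordSum_apply]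
  | k + 2 => by linarith [one_le_coordSum_betaVec n k, coordSum_betaVec_add_one_le n k]

theorem coordSum_betaVec_pos : 0 < coordSum (betaVec n k) :=
  one_pos.trans_le (one_le_coordSum_betaVec n k)

theorem le_two_mul_coordSum_betaVec (n : ℕ → ℕ) : ∀ k : ℕ, (k : ℝ) ≤ 2 * coordSum (betaVec n k)
  | 0 => by simp [(coordSum_betaVec_pos n 0).le]
  | 1 => by push_cast; linarith [one_le_coordSum_betaVec n 1]
  | k + 2 => by
    push_cast
    linarith [le_two_mul_coordSum_betaVec n k, coordSum_betaVec_add_one_le n k]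

theorem tendsto_coordSum_betaVec : Tendsto (fun k => coordSum (betaVec n k)) atTop atTop :=
  (tendsto_const_mul_atTop_of_pos two_pos).1
    (tendsto_atTop_mono (le_two_mul_coordSum_betaVec n) tendsto_natCast_atTop_atTop)

/-- The `k`-th vertex of the frequency body: the normalization of `betaVec n k`. -/
noncomputable def vertex (n : ℕ → ℕ) (k : ℕ) : Fin 3 → ℝ := normalize (betaVec n k)

theorem coordSum_vertex : coordSum (vertex n k) = 1 :=
  coordSum_normalize (coordSum_betaVec_pos n k).ne'

theorem coordSum_smul_vertex : coordSum (betaVec n k) • vertex n k = betaVec n k :=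
  coordSum_smul_normalize (coordSum_betaVec_pos n k).ne'

end AbelSubst

section Slope

/-- The determinant of the last two coordinates. Its sign compares the directions of the images of
`u` and `v` under projection from the vertex `e₀` of the simplex. -/
def turn (u v : Fin 3 → ℝ) : ℝ := u 1 * v 2 - u 2 * v 1

/-- An affine coordinate on the pencil of lines through the vertex `e₀` of the simplex; only
meaningful if `x 1 + x 2 ≠ 0`. -/
noncomputable def slope (x : Fin 3 → ℝ) : ℝ := x 1 / (x 1 + x 2)

theorem slope_sub_slope {u v : Fin 3 → ℝ} (hu : u 1 + u 2 ≠ 0) (hv : v 1 + v 2 ≠ 0) :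
    slope u - slope v = turn u v / ((u 1 + u 2) * (v 1 + v 2)) := by
  rw [slope, slope, turn, div_sub_div _ _ hu hv]
  ring

theorem slope_smul {c : ℝ} (hc : c ≠ 0) (x : Fin 3 → ℝ) : slope (c • x) = slope x := by
  simp only [slope, Pi.smul_apply, smul_eq_mul, ← mul_add, mul_div_mul_left _ _ hc]

theorem abs_slope_le_one {x : Fin 3 → ℝ} (hx : 0 ≤ x) : |slope x| ≤ 1 := by
  have h1 := hx 1
  have h2 := hx 2
  simp only [Pi.zero_apply] at h1 h2
  rw [slope, abs_of_nonneg (by positivity)]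
  exact div_le_one_of_le₀ (by linarith) (by positivity)

theorem continuousAt_slope {x : Fin 3 → ℝ} (hx : x 1 + x 2 ≠ 0) : ContinuousAt slope x :=
  ContinuousAt.div (continuous_apply 1).continuousAt
    ((continuous_apply 1).add (continuous_apply 2)).continuousAt hx

variable (n : ℕ → ℕ)

theorem betaVec_succ_one_add_two_pos : ∀ k, 0 < betaVec n (k + 1) 1 + betaVec n (k + 1) 2
  | 0 => by simp [betaVec_one]
  | k + 1 => add_pos_of_nonneg_of_pos (betaVec_nonneg n (k + 2) 1)
      (one_pos.trans_le (one_le_betaVec_add_two_two n k))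

-- Successive vertices turn alternately left and right around `e₀`.
theorem turn_signs (m : ℕ) :
    0 ≤ (-1) ^ (m + 1) * turn (betaVec n m) (betaVec n (m + 1)) ∧
    0 ≤ (-1) ^ (m + 1) * turn (betaVec n m) (gammaVec n m) ∧
    0 ≤ (-1) ^ m * turn (betaVec n (m + 1)) (gammaVec n m) := by
  induction m with
  | zero => simp [betaVec_zero, betaVec_one, gammaVec_zero, turn]
  | succ m ih =>
    obtain ⟨hββ, hβγ, hβγ'⟩ := ih
    have eββ : turn (betaVec n (m + 1)) (betaVec n (m + 2)) =
        turn (betaVec n (m + 1)) (gammaVec n m) -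
          (1 + n m) * turn (betaVec n m) (betaVec n (m + 1)) := by
      simp only [betaVec_add_two, gammaVec_succ, turn, Pi.add_apply, Pi.smul_apply, smul_eq_mul]
      ring
    have eβγ : turn (betaVec n (m + 1)) (gammaVec n (m + 1)) =
        turn (betaVec n (m + 1)) (gammaVec n m) -
          n m * turn (betaVec n m) (betaVec n (m + 1)) := by
      simp only [gammaVec_succ, turn, Pi.add_apply, Pi.smul_apply, smul_eq_mul]
      ring
    have eβγ' : turn (betaVec n (m + 2)) (gammaVec n (m + 1)) =
        turn (betaVec n m) (gammaVec n m) := by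
      simp only [betaVec_add_two, gammaVec_succ, turn, Pi.add_apply, Pi.smul_apply, smul_eq_mul]
      ring
    rw [eββ, eβγ, eβγ']
    refine ⟨?_, ?_, hβγ⟩
    · linear_combination hβγ' + (1 + (n m : ℝ)) * hββ
    · linear_combination hβγ' + (n m : ℝ) * hββ

theorem turn_betaVec_add_two_nonneg (m : ℕ) :
    0 ≤ (-1) ^ (m + 1) * turn (betaVec n m) (betaVec n (m + 2)) := by
  have hturn : turn (betaVec n m) (betaVec n (m + 2)) = turn (betaVec n m) (gammaVec n m) := by
    simp only [betaVec_add_two, gammaVec_succ, turn, Pi.add_apply, Pi.smul_apply, smul_eq_mul]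
    ring
  exact hturn ▸ (turn_signs n m).2.1

theorem slope_vertex (k : ℕ) : slope (vertex n k) = slope (betaVec n k) :=
  slope_smul (inv_ne_zero (coordSum_betaVec_pos n k).ne') _

theorem slope_vertex_add_two_le (m : ℕ) :
    (-1) ^ m * slope (vertex n (m + 3)) ≤ (-1) ^ m * slope (vertex n (m + 1)) := by
  have hpos := betaVec_succ_one_add_two_pos n
  rw [← sub_nonneg, ← mul_sub, slope_vertex, slope_vertex,
    slope_sub_slope (hpos m).ne' (hpos (m + 2)).ne', ← mul_div_assoc]
  refine div_nonneg ?_ (mul_pos (hpos m) (hpos (m + 2))).le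
  simpa [pow_succ] using turn_betaVec_add_two_nonneg n (m + 1)

theorem abs_slope_vertex_le_one (k : ℕ) : |slope (vertex n k)| ≤ 1 :=
  slope_vertex n k ▸ abs_slope_le_one (betaVec_nonneg n k)

theorem exists_tendsto_slope_vertex (m : ℕ) :
    ∃ r, Tendsto (fun i => slope (vertex n (m + 1 + 2 * i))) atTop (𝓝 r) := by
  have hanti : Antitone fun i => (-1) ^ m * slope (vertex n (m + 1 + 2 * i)) := by
    refine antitone_nat_of_succ_le fun i => ?_
    have h := slope_vertex_add_two_le n (m + 2 * i)
    rw [show m + 1 + 2 * (i + 1) = m + 2 * i + 3 by ring, add_right_comm m 1]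
    simpa [pow_add, pow_mul] using h
  have hbdd : BddBelow (Set.range fun i => (-1) ^ m * slope (vertex n (m + 1 + 2 * i))) := by
    refine ⟨-1, ?_⟩
    rintro _ ⟨i, rfl⟩
    refine (abs_le.1 ?_).1
    rw [abs_mul, abs_neg_one_pow, one_mul]
    exact abs_slope_vertex_le_one n _
  refine ⟨_, ((tendsto_atTop_ciInf hanti hbdd).const_mul ((-1) ^ m)).congr fun i => ?_⟩
  rw [← mul_assoc, ← mul_pow]
  simp

end Slope

section FreqBody

/-- The frequency body: the convex set of digit frequencies attached to the sequence `n` of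
renormalization exponents. -/
def freqBody (n : ℕ → ℕ) : Set (Fin 3 → ℝ) :=
  {x | coordSum x = 1 ∧ 0 ≤ x 2 ∧ ∀ k, 0 ≤ betaCoord n k x}

variable (n : ℕ → ℕ)

theorem convex_freqBody : Convex ℝ (freqBody n) := by
  rintro x ⟨hx, hx2, hxβ⟩ y ⟨hy, hy2, hyβ⟩ a b ha hb hab
  refine ⟨?_, add_nonneg (mul_nonneg ha hx2) (mul_nonneg hb hy2), fun k => ?_⟩
  · rw [map_add, map_smul, map_smul, hx, hy, smul_eq_mul, smul_eq_mul, mul_one, mul_one, hab]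
  · rw [map_add, map_smul, map_smul]
    exact add_nonneg (mul_nonneg ha (hxβ k)) (mul_nonneg hb (hyβ k))

theorem isClosed_freqBody : IsClosed (freqBody n) := by
  have hβ : IsClosed {x | ∀ k, 0 ≤ betaCoord n k x} := by
    simp only [Set.ofPred_forall]
    exact isClosed_iInter fun k => isClosed_le continuous_const (continuous_betaCoord n k)
  exact (isClosed_eq coordSum.continuous_of_finiteDimensional continuous_const).inter
    ((isClosed_le continuous_const (continuous_apply 2)).inter hβ)

variable {n} {x : Fin 3 → ℝ}

theorem nonneg_of_mem_freqBody (hx : x ∈ freqBody n) : 0 ≤ x := by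
  intro i
  fin_cases i
  exacts [hx.2.2 0, hx.2.2 1, hx.2.1]

variable (n) in
theorem isCompact_freqBody : IsCompact (freqBody n) := by
  refine (isCompact_Icc (a := (0 : Fin 3 → ℝ)) (b := 1)).of_isClosed_subset
    (isClosed_freqBody n) fun x hx => ?_
  have hx0 := nonneg_of_mem_freqBody hx
  exact ⟨hx0, fun i => (le_coordSum hx0 i).trans_eq hx.1⟩

theorem antitone_gammaCoord (hx : x ∈ freqBody n) : Antitone fun k => gammaCoord n k x :=
  antitone_nat_of_succ_le fun k => by
    rw [gammaCoord_succ]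
    exact sub_le_self _ (hx.2.2 (k + 2))

theorem betaCoord_nonneg_of_gammaCoord_nonpos {k : ℕ} (h0 : 0 ≤ betaCoord n k x)
    (h1 : 0 ≤ betaCoord n (k + 1) x) (hγ : gammaCoord n k x ≤ 0) {j : ℕ} (hj : k ≤ j) :
    0 ≤ betaCoord n j x := by
  suffices 0 ≤ betaCoord n j x ∧ 0 ≤ betaCoord n (j + 1) x ∧ gammaCoord n j x ≤ 0 from this.1
  induction j, hj using Nat.le_induction with
  | base => exact ⟨h0, h1, hγ⟩
  | succ j _ ih =>
    obtain ⟨hj0, hj1, hjγ⟩ := ih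
    have hj2 : 0 ≤ betaCoord n (j + 2) x := by
      rw [betaCoord_add_two]
      exact sub_nonneg.2 ((mul_nonpos_of_nonneg_of_nonpos (Nat.cast_nonneg _) hjγ).trans hj0)
    exact ⟨hj1, hj2, by rw [gammaCoord_succ]; linarith⟩

variable (n)

theorem betaCoord_betaVec_nonneg (j k : ℕ) : 0 ≤ betaCoord n j (betaVec n k) := by
  rcases le_total j k with hjk | hkj
  · refine abelSubstIter_symm_nonneg_of_le (n := n) hjk ?_ 0
    rw [betaVec, LinearEquiv.symm_apply_apply]
    exact fun i => by fin_cases i <;> simp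
  · exact betaCoord_nonneg_of_gammaCoord_nonpos (betaCoord_betaVec_self n k ▸ zero_le_one)
      (betaCoord_succ_betaVec n k).ge (gammaCoord_betaVec_self n k).le hkj

theorem vertex_mem_freqBody (k : ℕ) : vertex n k ∈ freqBody n := by
  have hc : 0 ≤ (coordSum (betaVec n k))⁻¹ := inv_nonneg.2 (coordSum_betaVec_pos n k).le
  refine ⟨coordSum_vertex n k, mul_nonneg hc (betaVec_nonneg n k 2), fun j => ?_⟩
  rw [vertex, normalize, map_smul]
  exact mul_nonneg hc (betaCoord_betaVec_nonneg n j k)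

theorem vertex_zero : vertex n 0 = ![1, 0, 0] := by
  simp [vertex, normalize, betaVec_zero, coordSum_apply]

theorem gammaCoord_succ_betaVec (k : ℕ) : gammaCoord n (k + 1) (betaVec n k) = -1 := by
  rw [gammaCoord_succ, betaCoord_add_two, gammaCoord_betaVec_self, betaCoord_betaVec_self]
  simp

theorem gammaCoord_vertex_neg (k : ℕ) : gammaCoord n (k + 1) (vertex n k) < 0 := by
  rw [vertex, normalize, map_smul, gammaCoord_succ_betaVec]
  simpa using coordSum_betaVec_pos n k

theorem gammaCoord_vertex_nonneg {j k : ℕ} (hjk : j ≤ k) : 0 ≤ gammaCoord n j (vertex n k) := by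
  have h := antitone_gammaCoord (vertex_mem_freqBody n k) hjk
  simpa [vertex, normalize, gammaCoord_betaVec_self] using h

theorem injective_vertex : Function.Injective (vertex n) := by
  refine Function.Injective.of_lt_imp_ne fun i j hij h => ?_
  exact (gammaCoord_vertex_neg n i).not_ge (h ▸ gammaCoord_vertex_nonneg n hij)

end FreqBody

section LimitFace

theorem tendsto_add_two_mul (m : ℕ) : Tendsto (fun i : ℕ => m + 2 * i) atTop atTop :=
  tendsto_atTop_mono (fun i => show i ≤ _ by lia) tendsto_id

/-- The face of the frequency body on which the vertices accumulate. -/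
def limitFace (n : ℕ → ℕ) : Set (Fin 3 → ℝ) := {x ∈ freqBody n | ∀ k, 0 ≤ gammaCoord n k x}

theorem vertex_notMem_limitFace (n : ℕ → ℕ) (k : ℕ) : vertex n k ∉ limitFace n :=
  fun h => (gammaCoord_vertex_neg n k).not_ge (h.2 (k + 1))

theorem convex_limitFace (n : ℕ → ℕ) : Convex ℝ (limitFace n) := by
  rintro x ⟨hx, hxγ⟩ y ⟨hy, hyγ⟩ a b ha hb hab
  refine ⟨convex_freqBody n hx hy ha hb hab, fun k => ?_⟩
  rw [map_add, map_smul, map_smul]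
  exact add_nonneg (mul_nonneg ha (hxγ k)) (mul_nonneg hb (hyγ k))

variable {n : ℕ → ℕ} {x y : Fin 3 → ℝ}

theorem gammaCoord_pos_of_mem_limitFace (hx : x ∈ limitFace n) (k : ℕ) :
    0 < gammaCoord n k x := by
  refine (hx.2 k).lt_of_ne' fun hk => ?_
  have hγ : ∀ j, k ≤ j → gammaCoord n j x = 0 := fun j hj =>
    le_antisymm ((antitone_gammaCoord hx.1 hj).trans hk.le) (hx.2 j)
  have hβ2 : ∀ j, k ≤ j → betaCoord n (j + 2) x = 0 := fun j hj => by
    have hstep := gammaCoord_succ n j x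
    rw [hγ j hj, hγ (j + 1) (by lia)] at hstep
    linarith
  have hβ : ∀ j, k ≤ j → betaCoord n j x = 0 := fun j hj => by
    have hstep := betaCoord_add_two n j x
    rw [hβ2 j hj, hγ j hj] at hstep
    linarith
  have hx0 : x = 0 := by
    rw [eq_betaCoord_smul_add n k x, hβ k le_rfl, hβ (k + 1) (by lia), hk]
    simp
  have hsum := hx.1.1
  simp [hx0] at hsum

theorem two_pos_of_mem_limitFace (hx : x ∈ limitFace n) : 0 < x 2 :=
  gammaCoord_pos_of_mem_limitFace hx 0

theorem one_add_two_pos_of_mem_limitFace (hx : x ∈ limitFace n) : 0 < x 1 + x 2 :=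
  add_pos_of_nonneg_of_pos (nonneg_of_mem_freqBody hx.1 1) (two_pos_of_mem_limitFace hx)

theorem mem_limitFace_of_mapClusterPt {g : ℕ → ℕ} (hg : Tendsto g atTop atTop)
    (hx : MapClusterPt x atTop fun i => vertex n (g i)) : x ∈ limitFace n := by
  refine ⟨(isClosed_freqBody n).mem_of_mapClusterPt hx
    (.of_forall fun i => vertex_mem_freqBody n (g i)), fun k => ?_⟩
  have hclosed : IsClosed {x | 0 ≤ gammaCoord n k x} :=
    isClosed_le continuous_const (continuous_gammaCoord n k)
  exact hclosed.mem_of_mapClusterPt hx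
    ((hg.eventually_ge_atTop k).mono fun i hi => gammaCoord_vertex_nonneg n hi)

variable (hn : ∃ᶠ k in atTop, n k ≠ 0)

include hn

theorem tendsto_gammaCoord_of_mem_limitFace (hx : x ∈ limitFace n) :
    Tendsto (fun k => gammaCoord n k x) atTop (𝓝 0) := by
  have hbdd : BddBelow (Set.range fun k => gammaCoord n k x) :=
    ⟨0, by rintro _ ⟨k, rfl⟩; exact hx.2 k⟩
  have hlim := tendsto_atTop_ciInf (antitone_gammaCoord hx.1) hbdd
  set l := ⨅ k, gammaCoord n k x
  have hβ2 : Tendsto (fun k => betaCoord n (k + 2) x) atTop (𝓝 0) := by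
    have hdiff := hlim.sub (hlim.comp (tendsto_add_atTop_nat 1))
    rw [sub_self] at hdiff
    exact hdiff.congr fun k => by simp [gammaCoord_succ]
  have hnγ : Tendsto (fun k => n k * gammaCoord n k x) atTop (𝓝 0) := by
    have hdiff := ((tendsto_add_atTop_iff_nat (f := fun k => betaCoord n k x) 2).1 hβ2).sub hβ2
    rw [sub_self] at hdiff
    exact hdiff.congr fun k => by rw [betaCoord_add_two, sub_sub_cancel]
  have hl : l ≤ 0 := by
    refine ge_of_tendsto_of_frequently hnγ (hn.mono fun k hk => ?_)
    calc l ≤ gammaCoord n k x := ciInf_le hbdd k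
      _ ≤ n k * gammaCoord n k x :=
        le_mul_of_one_le_left (hx.2 k) (by exact_mod_cast Nat.one_le_iff_ne_zero.2 hk)
  rwa [le_antisymm hl (le_ciInf hx.2)] at hlim

theorem isExtreme_limitFace : IsExtreme ℝ (freqBody n) (limitFace n) := by
  refine ⟨fun x hx => hx.1, ?_⟩
  rintro y hy z hz x hx ⟨a, b, ha, hb, -, rfl⟩
  refine ⟨hy, fun k => ?_⟩
  by_contra! hk
  have hcomb : ∀ j, gammaCoord n j (a • y + b • z) =
      a * gammaCoord n j y + b * gammaCoord n j z := fun j => by simp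
  have hyle : ∀ j, k ≤ j → gammaCoord n j y ≤ gammaCoord n k y :=
    fun j hj => antitone_gammaCoord hy hj
  have hzge : ∀ j, k ≤ j → 0 ≤ gammaCoord n j z := fun j hj => by
    have hxj := hx.2 j
    rw [hcomb] at hxj
    have : 0 ≤ b * gammaCoord n j z := by
      linarith [mul_neg_of_pos_of_neg ha ((hyle j hj).trans_lt hk)]
    exact nonneg_of_mul_nonneg_right this hb
  have hzmem : z ∈ limitFace n := ⟨hz, fun j => (hzge (max j k) (le_max_right _ _)).trans
    (antitone_gammaCoord hz (le_max_left _ _))⟩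
  have hay : Tendsto (fun j => a * gammaCoord n j y) atTop (𝓝 0) := by
    have hdiff := (tendsto_gammaCoord_of_mem_limitFace hn hx).sub
      ((tendsto_gammaCoord_of_mem_limitFace hn hzmem).const_mul b)
    rw [mul_zero, sub_zero] at hdiff
    exact hdiff.congr fun j => by rw [hcomb, add_sub_cancel_right]
  have hle : 0 ≤ a * gammaCoord n k y := le_of_tendsto hay
    (eventually_atTop.2 ⟨k, fun j hj => mul_le_mul_of_nonneg_left (hyle j hj) ha.le⟩)
  exact (mul_neg_of_pos_of_neg ha hk).not_ge hle

theorem two_le_two_of_slope_eq (hx : x ∈ limitFace n) (hy : y ∈ limitFace n)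
    (h : slope x = slope y) : y 2 ≤ x 2 := by
  by_contra! hlt
  have hx2 := two_pos_of_mem_limitFace hx
  have hy2 := two_pos_of_mem_limitFace hy
  have hturn : x 1 * y 2 = y 1 * x 2 := by
    rw [slope, slope, div_eq_div_iff (one_add_two_pos_of_mem_limitFace hx).ne'
      (one_add_two_pos_of_mem_limitFace hy).ne'] at h
    linarith
  have hmem : x ∈ openSegment ℝ (vertex n 0) y := by
    refine ⟨1 - x 2 / y 2, x 2 / y 2, sub_pos.2 ((div_lt_one hy2).2 hlt), by positivity,
      by ring, ?_⟩
    have hxs := coordSum_apply x ▸ hx.1.1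
    have hys := coordSum_apply y ▸ hy.1.1
    have h0 : 1 - x 2 / y 2 + x 2 / y 2 * y 0 = x 0 := by
      field_simp
      linear_combination x 2 * hys - y 2 * hxs + hturn
    have h1 : x 2 / y 2 * y 1 = x 1 := by
      field_simp
      linear_combination -hturn
    have h2 : x 2 / y 2 * y 2 = x 2 := div_mul_cancel₀ _ hy2.ne'
    rw [vertex_zero]
    ext i
    fin_cases i
    exacts [by simpa using h0, by simpa using h1, by simpa using h2]
  exact vertex_notMem_limitFace n 0
    ((isExtreme_limitFace hn).2 (vertex_mem_freqBody n 0) hy.1 hx hmem)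

theorem injOn_slope_limitFace : Set.InjOn slope (limitFace n) := by
  intro x hx y hy h
  have h2 : x 2 = y 2 := le_antisymm (two_le_two_of_slope_eq hn hy hx h.symm)
    (two_le_two_of_slope_eq hn hx hy h)
  have h1 : x 1 = y 1 := by
    have hx2 := two_pos_of_mem_limitFace hx
    rw [slope, slope, div_eq_div_iff (one_add_two_pos_of_mem_limitFace hx).ne'
      (one_add_two_pos_of_mem_limitFace hy).ne', ← h2] at h
    exact mul_right_cancel₀ hx2.ne' (by linarith)
  have hxs := coordSum_apply x ▸ hx.1.1
  have hys := coordSum_apply y ▸ hy.1.1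
  ext i
  fin_cases i
  exacts [by simp; linarith, h1, h2]

theorem exists_tendsto_of_tendsto_slope {g : ℕ → ℕ} (hg : Tendsto g atTop atTop) {r : ℝ}
    (hr : Tendsto (fun i => slope (vertex n (g i))) atTop (𝓝 r)) :
    ∃ v ∈ limitFace n, Tendsto (fun i => vertex n (g i)) atTop (𝓝 v) := by
  have hmem : ∀ᶠ i in atTop, vertex n (g i) ∈ freqBody n :=
    .of_forall fun i => vertex_mem_freqBody n (g i)
  have hcluster : ∀ x, MapClusterPt x atTop (fun i => vertex n (g i)) →
      x ∈ limitFace n ∧ slope x = r := fun x hx => by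
    have hxface := mem_limitFace_of_mapClusterPt hg hx
    have hcont := continuousAt_slope (one_add_two_pos_of_mem_limitFace hxface).ne'
    obtain ⟨φ, hφ, hlim⟩ := hx.tendsto_subseq
    exact ⟨hxface, tendsto_nhds_unique (hcont.tendsto.comp hlim) (hr.comp hφ.tendsto_atTop)⟩
  obtain ⟨v, -, hv⟩ := (isCompact_freqBody n).exists_mapClusterPt (le_principal_iff.2 hmem)
  obtain ⟨hvface, hvr⟩ := hcluster v hv
  refine ⟨v, hvface, (isCompact_freqBody n).tendsto_nhds_of_unique_mapClusterPt hmem ?_⟩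
  intro x _ hx
  obtain ⟨hxface, hxr⟩ := hcluster x hx
  exact injOn_slope_limitFace hn hxface hvface (hxr.trans hvr.symm)

theorem exists_tendsto_vertex_add_two_mul (m : ℕ) :
    ∃ v ∈ limitFace n, Tendsto (fun i => vertex n (m + 2 * i)) atTop (𝓝 v) := by
  obtain ⟨r, hr⟩ := exists_tendsto_slope_vertex n (m + 1)
  obtain ⟨v, hv, hlim⟩ := exists_tendsto_of_tendsto_slope hn (tendsto_add_two_mul _) hr
  refine ⟨v, hv, (tendsto_add_atTop_iff_nat 1).1 (hlim.congr fun i => ?_)⟩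
  congr 1
  ring

end LimitFace

section LimitSegment

variable {n : ℕ → ℕ} (hn : ∃ᶠ k in atTop, n k ≠ 0) {x : Fin 3 → ℝ}

include hn

theorem apply_nonpos_of_mem_limitFace (ψ : (Fin 3 → ℝ) →ₗ[ℝ] ℝ)
    (hψ : ∀ᶠ k in atTop, ψ (betaVec n k) ≤ 0) (hx : x ∈ limitFace n) : ψ x ≤ 0 := by
  obtain ⟨K, hK⟩ := eventually_atTop.1 hψ
  have hγ : ∀ k, K ≤ k → ψ (gammaVec n k) ≤ ψ (gammaVec n K) := by
    intro k hk
    induction k, hk using Nat.le_induction with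
    | base => exact le_rfl
    | succ k hk ih =>
      rw [gammaVec_succ, map_add, map_smul]
      exact add_le_of_le_of_nonpos ih
        (mul_nonpos_of_nonneg_of_nonpos (Nat.cast_nonneg _) (hK k hk))
  have hbound : ∀ k, K ≤ k → ψ x ≤ gammaCoord n k x * ψ (gammaVec n K) := fun k hk => by
    calc ψ x = betaCoord n k x * ψ (betaVec n k) +
          betaCoord n (k + 1) x * ψ (betaVec n (k + 1)) + gammaCoord n k x * ψ (gammaVec n k) := by
          conv_lhs => rw [eq_betaCoord_smul_add n k x]
          simp
      _ ≤ 0 + 0 + gammaCoord n k x * ψ (gammaVec n K) := by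
          gcongr
          · exact mul_nonpos_of_nonneg_of_nonpos (hx.1.2.2 k) (hK k hk)
          · exact mul_nonpos_of_nonneg_of_nonpos (hx.1.2.2 (k + 1)) (hK (k + 1) (by lia))
          · exact hx.2 k
          · exact hγ k hk
      _ = gammaCoord n k x * ψ (gammaVec n K) := by ring
  have hlim := (tendsto_gammaCoord_of_mem_limitFace hn hx).mul_const (ψ (gammaVec n K))
  rw [zero_mul] at hlim
  exact ge_of_tendsto hlim (eventually_atTop.2 ⟨K, hbound⟩)

theorem limitFace_subset_of_tendsto_nhdsSet {C : Set (Fin 3 → ℝ)} (hC : Convex ℝ C)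
    (hCc : IsClosed C) (hlim : Tendsto (vertex n) atTop (𝓝ˢ C)) : limitFace n ⊆ C := by
  intro x hx
  by_contra hxC
  obtain ⟨φ, u, hφC, hφx⟩ := geometric_hahn_banach_closed_point hC hCc hxC
  have hev : ∀ᶠ k in atTop, φ (vertex n k) < u := hlim.eventually
    ((isOpen_lt φ.continuous continuous_const).mem_nhdsSet.2 hφC)
  have hψ : ∀ᶠ k in atTop, (φ.toLinearMap - u • coordSum) (betaVec n k) ≤ 0 := by
    refine hev.mono fun k hk => ?_
    have hk' : (φ.toLinearMap - u • coordSum) (vertex n k) ≤ 0 := by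
      simpa [coordSum_vertex] using hk.le
    rw [← coordSum_smul_vertex n k, map_smul]
    exact mul_nonpos_of_nonneg_of_nonpos (coordSum_betaVec_pos n k).le hk'
  have := apply_nonpos_of_mem_limitFace hn _ hψ hx
  rw [LinearMap.sub_apply, LinearMap.smul_apply, hx.1.1, smul_eq_mul, mul_one, sub_nonpos] at this
  exact this.not_gt hφx

variable {v₀ v₁ : Fin 3 → ℝ}

theorem limitFace_eq_segment (hv₀ : v₀ ∈ limitFace n) (hv₁ : v₁ ∈ limitFace n)
    (hlim : Tendsto (vertex n) atTop (𝓝 v₀ ⊔ 𝓝 v₁)) : limitFace n = segment ℝ v₀ v₁ := by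
  refine (limitFace_subset_of_tendsto_nhdsSet hn (convex_segment v₀ v₁) ?_ ?_).antisymm
    ((convex_limitFace n).segment_subset hv₀ hv₁)
  · rw [← convexHull_pair]
    exact (Set.toFinite {v₀, v₁}).isClosed_convexHull _
  · exact hlim.mono_right (sup_le (nhds_le_nhdsSet (left_mem_segment ℝ v₀ v₁))
      (nhds_le_nhdsSet (right_mem_segment ℝ v₀ v₁)))

theorem extremePoints_freqBody_inter_limitFace (hv₀ : v₀ ∈ limitFace n) (hv₁ : v₁ ∈ limitFace n)
    (hlim : Tendsto (vertex n) atTop (𝓝 v₀ ⊔ 𝓝 v₁)) :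
    limitFace n ∩ (freqBody n).extremePoints ℝ = {v₀, v₁} := by
  rw [← (isExtreme_limitFace hn).extremePoints_eq, limitFace_eq_segment hn hv₀ hv₁ hlim,
    extremePoints_segment]

end LimitSegment

section Rationality

/-- The integer lattice `ℤ³` in `ℝ³`. -/
def intLattice : AddSubgroup (Fin 3 → ℝ) :=
  AddSubgroup.pi Set.univ fun _ => (Int.castAddHom ℝ).range

theorem mem_intLattice {x : Fin 3 → ℝ} : x ∈ intLattice ↔ ∀ i, ∃ z : ℤ, (z : ℝ) = x i := by
  simp only [intLattice, AddSubgroup.mem_pi, Set.mem_univ, forall_const, AddMonoidHom.mem_range,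
    Int.coe_castAddHom]

variable {x : Fin 3 → ℝ}

theorem abelSubst_mem_intLattice (n : ℕ) (hx : x ∈ intLattice) : abelSubst n x ∈ intLattice := by
  rw [mem_intLattice] at hx ⊢
  obtain ⟨⟨z₀, h₀⟩, ⟨z₁, h₁⟩, ⟨z₂, h₂⟩⟩ := And.intro (hx 0) (And.intro (hx 1) (hx 2))
  intro i
  fin_cases i
  exacts [⟨(n + 1) * z₁ + n * z₂, by simp [abelSubst_apply, h₁, h₂]⟩, ⟨z₀, h₀⟩,
    ⟨z₁ + z₂, by simp [abelSubst_apply, h₁, h₂]⟩]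

theorem abelSubst_symm_mem_intLattice (n : ℕ) (hx : x ∈ intLattice) :
    (abelSubst n).symm x ∈ intLattice := by
  rw [mem_intLattice] at hx ⊢
  obtain ⟨⟨z₀, h₀⟩, ⟨z₁, h₁⟩, ⟨z₂, h₂⟩⟩ := And.intro (hx 0) (And.intro (hx 1) (hx 2))
  intro i
  fin_cases i
  exacts [⟨z₁, h₁⟩, ⟨z₀ - n * z₂, by simp [abelSubst_symm_apply, h₀, h₂]⟩,
    ⟨z₂ - (z₀ - n * z₂), by simp [abelSubst_symm_apply, h₀, h₂]⟩]

variable (n : ℕ → ℕ) (k : ℕ)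

theorem abelSubstIter_mem_intLattice (hx : x ∈ intLattice) :
    abelSubstIter n k x ∈ intLattice := by
  induction k generalizing x with
  | zero => exact hx
  | succ k ih => exact ih (abelSubst_mem_intLattice (n k) hx)

theorem abelSubstIter_symm_mem_intLattice (hx : x ∈ intLattice) :
    (abelSubstIter n k).symm x ∈ intLattice := by
  induction k with
  | zero => exact hx
  | succ k ih => exact abelSubst_symm_mem_intLattice (n k) ih

theorem isRat_normalize (hx : x ∈ intLattice) : IsRat (normalize x) := by
  choose z hz using mem_intLattice.1 hx
  intro i
  refine ⟨((z 0 + z 1 + z 2 : ℤ) : ℚ)⁻¹ * z i, ?_⟩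
  simp [normalize, coordSum_apply, ← hz]

theorem isRat_vertex : IsRat (vertex n k) :=
  isRat_normalize (abelSubstIter_mem_intLattice n k
    (mem_intLattice.2 fun i => ⟨![1, 0, 0] i, by fin_cases i <;> simp⟩))

theorem isRat_normalize_gammaVec : IsRat (normalize (gammaVec n k)) :=
  isRat_normalize (abelSubstIter_mem_intLattice n k
    (mem_intLattice.2 fun i => ⟨![0, 0, 1] i, by fin_cases i <;> simp⟩))

theorem exists_nsmul_mem_intLattice (hx : IsRat x) : ∃ N : ℕ, N ≠ 0 ∧ (N : ℝ) • x ∈ intLattice := by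
  choose q hq using hx
  refine ⟨∏ i, (q i).den, Finset.prod_ne_zero_iff.2 fun i _ => (q i).den_ne_zero,
    mem_intLattice.2 fun i => ⟨(∏ j ∈ Finset.univ.erase i, (q j).den) * (q i).num, ?_⟩⟩
  have hnum : ((q i).num : ℝ) = (q i).den * q i := by exact_mod_cast (Rat.den_mul_eq_num (q i)).symm
  rw [Pi.smul_apply, hq i, ← Finset.mul_prod_erase _ _ (Finset.mem_univ i)]
  push_cast
  rw [hnum, smul_eq_mul]
  ring

variable {n}

-- If `x` were rational, its coordinates `gammaCoord n k x > 0` would share a denominator.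
theorem not_isRat_of_mem_limitFace (hn : ∃ᶠ k in atTop, n k ≠ 0) (hx : x ∈ limitFace n) :
    ¬ IsRat x := by
  intro hrat
  obtain ⟨N, hN, hNx⟩ := exists_nsmul_mem_intLattice hrat
  have hNpos : (0 : ℝ) < N := by positivity
  have hge : ∀ k, 1 ≤ N * gammaCoord n k x := fun k => by
    obtain ⟨z, hz⟩ := mem_intLattice.1 (abelSubstIter_symm_mem_intLattice n k hNx) 2
    have hz' : (z : ℝ) = N * gammaCoord n k x := by
      rw [hz, map_smul]
      rfl
    have hzpos : 0 < z := by
      exact_mod_cast hz' ▸ mul_pos hNpos (gammaCoord_pos_of_mem_limitFace hx k)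
    rw [← hz']
    exact_mod_cast hzpos
  have hlim := (tendsto_gammaCoord_of_mem_limitFace hn hx).const_mul (N : ℝ)
  rw [mul_zero] at hlim
  exact one_pos.not_ge (ge_of_tendsto' hlim hge)

end Rationality

section ExtremePoints

theorem gammaVec_eq_betaVec_sub (n : ℕ → ℕ) (k : ℕ) :
    gammaVec n k = betaVec n (k + 2) - (n k + 1 : ℝ) • betaVec n k := by
  rw [betaVec_add_two, gammaVec_succ]
  module

theorem betaCoord_betaVec_succ (n : ℕ → ℕ) (k : ℕ) : betaCoord n k (betaVec n (k + 1)) = 0 := by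
  simp [betaCoord_apply, betaVec_succ]

theorem gammaCoord_betaVec_succ (n : ℕ → ℕ) (k : ℕ) : gammaCoord n k (betaVec n (k + 1)) = 0 := by
  simp [gammaCoord_apply, betaVec_succ]

theorem eq_neg_gammaCoord_smul_add (n : ℕ → ℕ) (k : ℕ) (x : Fin 3 → ℝ) :
    x = -gammaCoord n (k + 1) x • betaVec n k + betaCoord n (k + 1) x • betaVec n (k + 1) +
      gammaCoord n k x • betaVec n (k + 2) := by
  conv_lhs => rw [eq_betaCoord_smul_add n k x, gammaVec_eq_betaVec_sub]
  rw [gammaCoord_succ, betaCoord_add_two]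
  module

theorem mem_of_gammaCoord_nonpos {n : ℕ → ℕ} {k : ℕ} {C : Set (Fin 3 → ℝ)} (hC : Convex ℝ C)
    (hv : ∀ j ≤ k + 1, vertex n j ∈ C) {x : Fin 3 → ℝ} (hsum : coordSum x = 1) (hx2 : 0 ≤ x 2)
    (hβ : ∀ j ≤ k + 1, 0 ≤ betaCoord n j x) (hγ : gammaCoord n k x ≤ 0) : x ∈ C := by
  induction k with
  | zero =>
    have hγ0 : gammaCoord n 0 x = 0 := le_antisymm hγ hx2
    refine mem_of_eq_conicCombination hC (coordSum_betaVec_pos n 0) (coordSum_betaVec_pos n 1)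
      (coordSum_betaVec_pos n 1) (hv 0 (by lia)) (hv 1 le_rfl) (hv 1 le_rfl) (hβ 0 (by lia))
      (hβ 1 le_rfl) le_rfl ?_ hsum
    simpa [hγ0] using eq_betaCoord_smul_add n 0 x
  | succ k ih =>
    rcases le_total (gammaCoord n k x) 0 with hk | hk
    · exact ih (fun j hj => hv j (by lia)) (fun j hj => hβ j (by lia)) hk
    · exact mem_of_eq_conicCombination hC (coordSum_betaVec_pos n k)
        (coordSum_betaVec_pos n (k + 1)) (coordSum_betaVec_pos n (k + 2)) (hv k (by lia))
        (hv (k + 1) (by lia)) (hv (k + 2) le_rfl) (neg_nonneg.2 hγ) (hβ (k + 1) (by lia)) hk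
        (eq_neg_gammaCoord_smul_add n k x) hsum

variable {n : ℕ → ℕ}

theorem mem_range_vertex_of_mem_extremePoints {x : Fin 3 → ℝ}
    (hx : x ∈ (freqBody n).extremePoints ℝ) (hface : x ∉ limitFace n) :
    x ∈ Set.range (vertex n) := by
  have hex : ∃ k, gammaCoord n k x < 0 := by
    by_contra! h
    exact hface ⟨hx.1, h⟩
  obtain ⟨k, hk⟩ := hex
  have hmem : x ∈ convexHull ℝ (Set.range (vertex n)) :=
    mem_of_gammaCoord_nonpos (convex_convexHull ℝ _)
      (fun j _ => subset_convexHull ℝ _ (Set.mem_range_self j)) hx.1.1 hx.1.2.1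
      (fun j _ => hx.1.2.2 j) hk.le
  have hsub : convexHull ℝ (Set.range (vertex n)) ⊆ freqBody n :=
    convexHull_min (Set.range_subset_iff.2 (vertex_mem_freqBody n)) (convex_freqBody n)
  exact extremePoints_convexHull_subset
    (inter_extremePoints_subset_extremePoints_of_subset hsub ⟨hmem, hx⟩)

theorem eq_zero_of_mem_openSegment {E : Type*} [AddCommGroup E] [Module ℝ E] {φ : E →ₗ[ℝ] ℝ}
    {x y z : E} (hx : φ x = 0) (hy : 0 ≤ φ y) (hz : 0 ≤ φ z) (hxyz : x ∈ openSegment ℝ y z) :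
    φ y = 0 := by
  obtain ⟨a, b, ha, hb, -, rfl⟩ := hxyz
  rw [map_add, map_smul, map_smul, smul_eq_mul, smul_eq_mul,
    add_eq_zero_iff_of_nonneg (mul_nonneg ha.le hy) (mul_nonneg hb.le hz)] at hx
  exact (mul_eq_zero.1 hx.1).resolve_left ha.ne'

theorem vertex_succ_mem_extremePoints {k : ℕ} (hk : n k ≠ 0) :
    vertex n (k + 1) ∈ (freqBody n).extremePoints ℝ := by
  rw [mem_extremePoints_iff_left]
  refine ⟨vertex_mem_freqBody n _, fun y hy z hz hseg => ?_⟩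
  have hvanish : ∀ j, betaCoord n j (betaVec n (k + 1)) = 0 → betaCoord n j y = 0 := fun j hj =>
    eq_zero_of_mem_openSegment (by simp [vertex, normalize, hj]) (hy.2.2 j) (hz.2.2 j) hseg
  have hβ : betaCoord n k y = 0 := hvanish k (betaCoord_betaVec_succ n k)
  have hβ2 : betaCoord n (k + 2) y = 0 := hvanish (k + 2) (betaCoord_succ_betaVec n (k + 1))
  have hγ : gammaCoord n k y = 0 := by
    rw [betaCoord_add_two, hβ] at hβ2
    simpa [hk] using hβ2
  have hy' : y = betaCoord n (k + 1) y • betaVec n (k + 1) := by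
    simpa [hβ, hγ] using eq_betaCoord_smul_add n k y
  have hsum : coordSum y = 1 := hy.1
  rw [hy', map_smul, smul_eq_mul] at hsum
  rw [vertex, hy', eq_inv_of_mul_eq_one_left hsum, normalize]

theorem betaVec_add_four_add (n : ℕ → ℕ) {k : ℕ} (hk : n (k + 1) = 0) :
    betaVec n (k + 4) + betaVec n k = (2 + n (k + 2) : ℝ) • betaVec n (k + 2) := by
  rw [betaVec_add_two n (k + 2), gammaVec_succ n (k + 2), gammaVec_succ n (k + 1), hk,
    betaVec_add_two n k]
  module

theorem vertex_add_two_notMem_extremePoints {k : ℕ} (hk : n (k + 1) = 0) :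
    vertex n (k + 2) ∉ (freqBody n).extremePoints ℝ := by
  intro hext
  have hseg : vertex n (k + 2) ∈ openSegment ℝ (vertex n (k + 4)) (vertex n k) := by
    have hpos : (2 + n (k + 2) : ℝ) ≠ 0 := by positivity
    have h := normalize_add_mem_openSegment (coordSum_betaVec_pos n (k + 4))
      (coordSum_betaVec_pos n k)
    rwa [betaVec_add_four_add n hk, normalize_smul hpos] at h
  have heq := (mem_extremePoints_iff_left.1 hext).2 _ (vertex_mem_freqBody n _) _
    (vertex_mem_freqBody n _) hseg
  exact absurd (injective_vertex n heq) (by lia)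

theorem isPolygonalVertex_of_eq_combination {i j l : ℕ} (p q r : (Fin 3 → ℝ) →ₗ[ℝ] ℝ)
    (hp : 0 < p (betaVec n i)) (hq : ∀ x ∈ freqBody n, 0 ≤ q x) (hr : ∀ x ∈ freqBody n, 0 ≤ r x)
    (hcomb : ∀ x, x = p x • betaVec n i + q x • betaVec n j + r x • betaVec n l) :
    IsPolygonalVertex (freqBody n) (vertex n i) := by
  have hpos : 0 < p (vertex n i) := by
    rw [vertex, normalize, map_smul]
    exact mul_pos (inv_pos.2 (coordSum_betaVec_pos n i)) hp
  refine ⟨{x | 0 < p x},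
    (isOpen_lt continuous_const p.continuous_of_finiteDimensional).mem_nhds hpos,
    vertex n j, vertex_mem_freqBody n j, vertex n l, vertex_mem_freqBody n l, ?_⟩
  ext x
  refine and_congr_left fun hpx =>
    ⟨fun hx => ?_, fun hx => convexHull_min ?_ (convex_freqBody n) hx⟩
  · exact mem_of_eq_conicCombination (convex_convexHull ℝ _) (coordSum_betaVec_pos n i)
      (coordSum_betaVec_pos n j) (coordSum_betaVec_pos n l)
      (subset_convexHull ℝ _ (by simp [vertex])) (subset_convexHull ℝ _ (by simp [vertex]))
      (subset_convexHull ℝ _ (by simp [vertex])) (le_of_lt hpx) (hq x hx) (hr x hx) (hcomb x) hx.1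
  · rintro y (rfl | rfl | rfl) <;> exact vertex_mem_freqBody n _

theorem isPolygonalVertex_vertex_zero : IsPolygonalVertex (freqBody n) (vertex n 0) :=
  isPolygonalVertex_of_eq_combination (-gammaCoord n 1) (betaCoord n 1) (gammaCoord n 0)
    (by simp [gammaCoord_succ_betaVec n 0]) (fun _ hx => hx.2.2 1) (fun _ hx => hx.2.1)
    (eq_neg_gammaCoord_smul_add n 0)

theorem isPolygonalVertex_vertex_one : IsPolygonalVertex (freqBody n) (vertex n 1) := by
  refine isPolygonalVertex_of_eq_combination (j := 0) (l := 3)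
    (betaCoord n 1 - (n 1 + 1 : ℝ) • gammaCoord n 0) (betaCoord n 2) (gammaCoord n 0) ?_
    (fun _ hx => hx.2.2 2) (fun _ hx => hx.2.1) fun x => ?_
  · simp [betaCoord_betaVec_self, gammaCoord_betaVec_succ n 0]
  · rw [betaVec_add_two n 1, gammaVec_succ n 1, gammaVec_succ n 0, betaCoord_add_two]
    conv_lhs => rw [eq_betaCoord_smul_add n 0 x]
    simp only [LinearMap.sub_apply, LinearMap.smul_apply, smul_eq_mul]
    module

theorem isPolygonalVertex_vertex_add_two {k : ℕ} (hk : n (k + 1) ≠ 0) :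
    IsPolygonalVertex (freqBody n) (vertex n (k + 2)) := by
  set c : ℝ := (n (k + 1) : ℝ)⁻¹ with hc
  have hc0 : 0 ≤ c := by positivity
  refine isPolygonalVertex_of_eq_combination (j := k) (l := k + 4)
    (betaCoord n (k + 2) - c • betaCoord n (k + 3) - ((1 + n (k + 2)) * c) • betaCoord n (k + 1))
    (c • betaCoord n (k + 3)) (c • betaCoord n (k + 1)) ?_
    (fun x hx => mul_nonneg hc0 (hx.2.2 _)) (fun x hx => mul_nonneg hc0 (hx.2.2 _)) fun x => ?_
  · simp [betaCoord_betaVec_self, betaCoord_succ_betaVec n (k + 2),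
      betaCoord_betaVec_succ n (k + 1)]
  · set r := c * betaCoord n (k + 1) x with hr
    have hβ1 : betaCoord n (k + 1) x = n (k + 1) * r := by rw [hr, hc]; field_simp
    have hβ3 : c * betaCoord n (k + 3) x = r - gammaCoord n (k + 1) x := by
      rw [betaCoord_add_two, hβ1, hc]; field_simp
    have hβk : betaVec n k = betaVec n (k + 2) - gammaVec n (k + 1) := by
      rw [betaVec_add_two, add_sub_cancel_right]
    simp only [LinearMap.sub_apply, LinearMap.smul_apply, smul_eq_mul, mul_assoc, hβ3, ← hr]
    rw [hβk, betaVec_add_two n (k + 2), gammaVec_succ n (k + 2), gammaVec_succ n (k + 1)]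
    conv_lhs => rw [eq_betaCoord_smul_add n (k + 1) x, hβ1]
    module

theorem isPolygonalVertex_of_mem_extremePoints :
    ∀ {k : ℕ}, vertex n k ∈ (freqBody n).extremePoints ℝ →
      IsPolygonalVertex (freqBody n) (vertex n k)
  | 0, _ => isPolygonalVertex_vertex_zero
  | 1, _ => isPolygonalVertex_vertex_one
  | _ + 2, hext =>
    isPolygonalVertex_vertex_add_two fun hk => vertex_add_two_notMem_extremePoints hk hext

end ExtremePoints

section ClusterPoints

variable {X ι : Type*} [TopologicalSpace X] {x a b : X}

theorem mapClusterPt_of_accPt_range [T1Space X] {u : ℕ → X} (h : AccPt x (𝓟 (Set.range u))) :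
    MapClusterPt x atTop u := by
  rw [mapClusterPt_iff_frequently]
  intro s hs
  have hinf : (s ∩ Set.range u).Infinite := .of_accPt (h.nhds_inter hs)
  rw [← Set.image_preimage_eq_inter_range] at hinf
  exact Nat.frequently_atTop_iff_infinite.2 (Set.Infinite.of_image u hinf)

theorem eq_or_eq_of_mapClusterPt [T2Space X] {u : ι → X} {l : Filter ι}
    (hu : Tendsto u l (𝓝 a ⊔ 𝓝 b)) (h : MapClusterPt x l u) : x = a ∨ x = b := by
  have hne : NeBot (𝓝 x ⊓ (𝓝 a ⊔ 𝓝 b)) := NeBot.mono h (inf_le_inf_left _ hu)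
  rw [inf_sup_left, sup_neBot] at hne
  exact hne.imp (fun h => eq_of_nhds_neBot h) fun h => eq_of_nhds_neBot h

end ClusterPoints

theorem tendsto_atTop_sup_of_even_odd {α : Type*} {u : ℕ → α} {l l' : Filter α}
    (heven : Tendsto (fun i => u (2 * i)) atTop l)
    (hodd : Tendsto (fun i => u (1 + 2 * i)) atTop l') :
    Tendsto u atTop (l ⊔ l') := by
  intro s hs
  obtain ⟨K, hK⟩ := eventually_atTop.1 (heven hs.1)
  obtain ⟨K', hK'⟩ := eventually_atTop.1 (hodd hs.2)
  refine mem_atTop_sets.2 ⟨2 * K + 2 * K' + 1, fun k hk => ?_⟩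
  rcases Nat.even_or_odd' k with ⟨i, rfl | rfl⟩
  · exact hK i (by lia)
  · rw [add_comm]
    exact hK' i (by lia)

section Accumulation

theorem tendsto_normalize_add_const {ι : Type*} {l : Filter ι} {u : ι → Fin 3 → ℝ}
    {a : Fin 3 → ℝ} (hsum : Tendsto (fun i => coordSum (u i)) l atTop)
    (hu : Tendsto (fun i => normalize (u i)) l (𝓝 a)) (d : Fin 3 → ℝ) :
    Tendsto (fun i => normalize (u i + d)) l (𝓝 a) := by
  have hsum' : Tendsto (fun i => coordSum (u i + d)) l atTop := by
    simpa only [map_add] using tendsto_atTop_add_const_right l (coordSum d) hsum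
  have hlim : Tendsto (fun i => normalize (u i) +
      (coordSum (u i + d))⁻¹ • (d - coordSum d • normalize (u i))) l (𝓝 a) := by
    simpa using hu.add (hsum'.inv_tendsto_atTop.smul (tendsto_const_nhds.sub (hu.const_smul _)))
  refine hlim.congr' ?_
  filter_upwards [hsum.eventually_gt_atTop 0, hsum'.eventually_gt_atTop 0] with i hi hi'
  have hd : coordSum d = coordSum (u i + d) - coordSum (u i) := by rw [map_add, add_sub_cancel_left]
  rw [normalize.eq_def (u i + d), hd, sub_smul, coordSum_smul_normalize hi.ne', smul_sub, smul_sub,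
    inv_smul_smul₀ hi'.ne']
  module

variable {n : ℕ → ℕ} {a b v : Fin 3 → ℝ}

theorem tendsto_vertex_succ_of_eventually_zero {m : ℕ} (hm : ∀ᶠ i in atTop, n (m + 2 * i + 1) = 0)
    (ha : Tendsto (fun i => vertex n (m + 2 * i)) atTop (𝓝 a)) :
    Tendsto (fun i => vertex n (m + 2 * i + 1)) atTop (𝓝 a) := by
  obtain ⟨K, hK⟩ := eventually_atTop.1 hm
  set d := betaVec n (m + 2 * K + 1) - betaVec n (m + 2 * K) with hd
  have hconst : ∀ i ≥ K, betaVec n (m + 2 * i) + d = betaVec n (m + 2 * i + 1) := by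
    intro i hi
    induction i, hi using Nat.le_induction with
    | base => rw [hd, add_sub_cancel]
    | succ i hi ih =>
      rw [show m + 2 * (i + 1) = m + 2 * i + 2 by ring, betaVec_add_two n (m + 2 * i + 1), ← ih,
        gammaVec_succ, hK i hi, betaVec_add_two n (m + 2 * i), Nat.cast_zero, zero_smul]
      abel
  refine (tendsto_normalize_add_const ((tendsto_coordSum_betaVec n).comp (tendsto_add_two_mul m))
    ha d).congr' ?_
  filter_upwards [eventually_ge_atTop K] with i hi
  rw [vertex, ← hconst i hi]

theorem accPt_extremePoints_of_tendsto {g : ℕ → ℕ} (hv : v ∈ limitFace n)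
    (hlim : Tendsto (fun i => vertex n (g i + 1)) atTop (𝓝 v)) (hg : ∃ᶠ i in atTop, n (g i) ≠ 0) :
    AccPt v (𝓟 ((freqBody n).extremePoints ℝ)) := by
  rw [accPt_iff_frequently]
  refine hlim.frequently (hg.mono fun i hi => ⟨?_, vertex_succ_mem_extremePoints hi⟩)
  exact fun h => vertex_notMem_limitFace n _ (h ▸ hv)

theorem accPt_extremePoints_of_tendsto_add_two_mul (hn : ∃ᶠ k in atTop, n k ≠ 0) {m : ℕ}
    (hv : a ∈ limitFace n) (ha : Tendsto (fun i => vertex n (m + 2 * i)) atTop (𝓝 a))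
    (hb : Tendsto (fun i => vertex n (m + 2 * i + 1)) atTop (𝓝 b))
    (hlim : Tendsto (vertex n) atTop (𝓝 a ⊔ 𝓝 b)) :
    AccPt a (𝓟 ((freqBody n).extremePoints ℝ)) := by
  by_cases hm : ∃ᶠ i in atTop, n (m + 2 * i + 1) ≠ 0
  · refine accPt_extremePoints_of_tendsto hv ?_ hm
    exact ((tendsto_add_atTop_iff_nat (f := fun i => vertex n (m + 2 * i)) 1).2 ha).congr fun i =>
      congrArg _ (by ring)
  · have hba : b = a := tendsto_nhds_unique hb (tendsto_vertex_succ_of_eventually_zero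
      (by simpa only [not_frequently, not_not] using hm) ha)
    rw [hba, sup_idem] at hlim
    exact accPt_extremePoints_of_tendsto hv ((tendsto_add_atTop_iff_nat 1).2 hlim) hn

theorem eq_or_eq_of_accPt_extremePoints (hn : ∃ᶠ k in atTop, n k ≠ 0) (ha : a ∈ limitFace n)
    (hb : b ∈ limitFace n) (hlim : Tendsto (vertex n) atTop (𝓝 a ⊔ 𝓝 b))
    (hv : AccPt v (𝓟 ((freqBody n).extremePoints ℝ))) : v = a ∨ v = b := by
  have hsub : (freqBody n).extremePoints ℝ ⊆ {a, b} ∪ Set.range (vertex n) := fun x hx => by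
    by_cases hface : x ∈ limitFace n
    · exact Or.inl ((extremePoints_freqBody_inter_limitFace hn ha hb hlim).subset ⟨hface, hx⟩)
    · exact Or.inr (mem_range_vertex_of_mem_extremePoints hx hface)
  have hacc := hv.mono (principal_mono.2 hsub)
  rw [← sup_principal, accPt_sup] at hacc
  refine eq_or_eq_of_mapClusterPt hlim (mapClusterPt_of_accPt_range (hacc.resolve_left fun h => ?_))
  exact Set.Infinite.of_accPt h (Set.toFinite _)

theorem exists_limitFace_tendsto_accPt_iff (hn : ∃ᶠ k in atTop, n k ≠ 0) :
    ∃ v₀ ∈ limitFace n, ∃ v₁ ∈ limitFace n, Tendsto (vertex n) atTop (𝓝 v₀ ⊔ 𝓝 v₁) ∧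
      ∀ v, AccPt v (𝓟 ((freqBody n).extremePoints ℝ)) ↔ v = v₀ ∨ v = v₁ := by
  obtain ⟨v₀, hv₀, hlim₀⟩ := exists_tendsto_vertex_add_two_mul hn 0
  obtain ⟨v₁, hv₁, hlim₁⟩ := exists_tendsto_vertex_add_two_mul hn 1
  have hlim : Tendsto (vertex n) atTop (𝓝 v₀ ⊔ 𝓝 v₁) :=
    tendsto_atTop_sup_of_even_odd (by simpa only [zero_add] using hlim₀) hlim₁
  have hacc₀ : AccPt v₀ (𝓟 ((freqBody n).extremePoints ℝ)) :=
    accPt_extremePoints_of_tendsto_add_two_mul hn hv₀ hlim₀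
      (hlim₁.congr fun i => congrArg _ (by ring)) hlim
  have hacc₁ : AccPt v₁ (𝓟 ((freqBody n).extremePoints ℝ)) :=
    accPt_extremePoints_of_tendsto_add_two_mul hn hv₁ hlim₁
      (((tendsto_add_atTop_iff_nat 1).2 hlim₀).congr fun i => congrArg _ (by ring))
      (sup_comm (𝓝 v₀) (𝓝 v₁) ▸ hlim)
  refine ⟨v₀, hv₀, v₁, hv₁, hlim, fun v =>
    ⟨eq_or_eq_of_accPt_extremePoints hn hv₀ hv₁ hlim, ?_⟩⟩
  rintro (rfl | rfl)
  exacts [hacc₀, hacc₁]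

theorem isRat_and_isPolygonalVertex_of_notMem_limitFace {u : Fin 3 → ℝ}
    (hu : u ∈ (freqBody n).extremePoints ℝ) (hface : u ∉ limitFace n) :
    IsRat u ∧ IsPolygonalVertex (freqBody n) u := by
  obtain ⟨k, rfl⟩ := mem_range_vertex_of_mem_extremePoints hu hface
  exact ⟨isRat_vertex n k, isPolygonalVertex_of_mem_extremePoints hu⟩

end Accumulation

section Polytope

/-- A rational polytope: the convex hull of finitely many rational points. -/
def IsRationalPolytope (Λ : Set (Fin 3 → ℝ)) : Prop :=
  ∃ F : Finset (Fin 3 → ℝ), (∀ v ∈ F, IsRat v) ∧ Λ = convexHull ℝ (F : Set (Fin 3 → ℝ))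

theorem IsRationalPolytope.finite_extremePoints {Λ : Set (Fin 3 → ℝ)} (h : IsRationalPolytope Λ) :
    (Λ.extremePoints ℝ).Finite := by
  obtain ⟨F, -, rfl⟩ := h
  exact F.finite_toSet.subset extremePoints_convexHull_subset

theorem isRationalPolytope_convexHull {A : Set (Fin 3 → ℝ)} (hA : A.Finite)
    (hrat : ∀ v ∈ A, IsRat v) : IsRationalPolytope (convexHull ℝ A) :=
  ⟨hA.toFinset, by simpa using hrat, by rw [hA.coe_toFinset]⟩

variable {n : ℕ → ℕ} {K : ℕ} (hK : ∀ k ≥ K, n k = 0)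

include hK

theorem gammaVec_eq_of_forall_eq_zero {k : ℕ} (hk : K ≤ k) : gammaVec n k = gammaVec n K := by
  induction k, hk using Nat.le_induction with
  | base => rfl
  | succ k hk ih => rw [gammaVec_succ, hK k hk, ih, Nat.cast_zero, zero_smul, add_zero]

theorem betaVec_eq_of_forall_eq_zero (i : ℕ) :
    betaVec n (K + 2 * i) = (i : ℝ) • gammaVec n K + betaVec n K := by
  induction i with
  | zero => simp
  | succ i ih =>
    rw [show K + 2 * (i + 1) = K + 2 * i + 2 by ring, betaVec_add_two, ih,
      gammaVec_eq_of_forall_eq_zero hK (k := K + 2 * i + 1) (by lia)]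
    push_cast
    module

theorem normalize_gammaVec_mem_of_isClosed {C : Set (Fin 3 → ℝ)} (hC : IsClosed C)
    (hv : ∀ k, vertex n k ∈ C) : normalize (gammaVec n K) ∈ C := by
  have hpos : 0 < coordSum (gammaVec n K) := one_pos.trans_le (one_le_coordSum_gammaVec n K)
  have hsum : Tendsto (fun i : ℕ => coordSum ((i : ℝ) • gammaVec n K)) atTop atTop := by
    simpa only [map_smul, smul_eq_mul] using tendsto_natCast_atTop_atTop.atTop_mul_const hpos
  have hconst : Tendsto (fun i : ℕ => normalize ((i : ℝ) • gammaVec n K)) atTop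
      (𝓝 (normalize (gammaVec n K))) := by
    refine tendsto_const_nhds.congr' ?_
    filter_upwards [eventually_ne_atTop 0] with i hi
    rw [normalize_smul (Nat.cast_ne_zero.2 hi)]
  refine hC.mem_of_tendsto (tendsto_normalize_add_const hsum hconst (betaVec n K))
    (.of_forall fun i => ?_)
  rw [← betaVec_eq_of_forall_eq_zero hK]
  exact hv _

theorem freqBody_eq_convexHull : freqBody n =
    convexHull ℝ (insert (normalize (gammaVec n K)) (vertex n '' Set.Iic (K + 1))) := by
  refine Set.Subset.antisymm (fun x hx => ?_) (convexHull_min ?_ (convex_freqBody n))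
  · have hv : ∀ j ≤ K + 1, vertex n j ∈
        convexHull ℝ (insert (normalize (gammaVec n K)) (vertex n '' Set.Iic (K + 1))) :=
      fun j hj => subset_convexHull ℝ _ (Or.inr (Set.mem_image_of_mem _ hj))
    rcases le_total (gammaCoord n K x) 0 with hγ | hγ
    · exact mem_of_gammaCoord_nonpos (convex_convexHull ℝ _) hv hx.1 hx.2.1
        (fun j _ => hx.2.2 j) hγ
    · exact mem_of_eq_conicCombination (convex_convexHull ℝ _) (coordSum_betaVec_pos n K)
        (coordSum_betaVec_pos n (K + 1)) (one_pos.trans_le (one_le_coordSum_gammaVec n K))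
        (hv K (by lia)) (hv (K + 1) le_rfl) (subset_convexHull ℝ _ (Set.mem_insert _ _))
        (hx.2.2 K) (hx.2.2 (K + 1)) hγ (eq_betaCoord_smul_add n K x) hx.1
  · rintro _ (rfl | ⟨j, -, rfl⟩)
    exacts [normalize_gammaVec_mem_of_isClosed hK (isClosed_freqBody n) (vertex_mem_freqBody n),
      vertex_mem_freqBody n j]

theorem isRationalPolytope_freqBody : IsRationalPolytope (freqBody n) := by
  rw [freqBody_eq_convexHull hK]
  refine isRationalPolytope_convexHull (((Set.finite_Iic _).image _).insert _) ?_
  rintro _ (rfl | ⟨j, -, rfl⟩)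
  exacts [isRat_normalize_gammaVec n K, isRat_vertex n j]

end Polytope

theorem freqBody_subset_of_isClosed_of_convex {n : ℕ → ℕ} {C : Set (Fin 3 → ℝ)} (hC : IsClosed C)
    (hconv : Convex ℝ C) (hv : ∀ k, vertex n k ∈ C) : freqBody n ⊆ C := by
  by_cases hn : ∃ᶠ k in atTop, n k ≠ 0
  · intro x hx
    by_cases hface : x ∈ limitFace n
    · have hlim : Tendsto (vertex n) atTop (𝓝ˢ C) :=
        (tendsto_principal.2 (.of_forall hv)).mono_right principal_le_nhdsSet
      exact limitFace_subset_of_tendsto_nhdsSet hn hconv hC hlim hface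
    · obtain ⟨k, hk⟩ : ∃ k, gammaCoord n k x < 0 := by
        by_contra! h
        exact hface ⟨hx, h⟩
      exact mem_of_gammaCoord_nonpos hconv (fun j _ => hv j) hx.1 hx.2.1 (fun j _ => hx.2.2 j) hk.le
  · obtain ⟨K, hK⟩ : ∃ K, ∀ k ≥ K, n k = 0 := by simpa using hn
    rw [freqBody_eq_convexHull hK]
    refine convexHull_min ?_ hconv
    rintro _ (rfl | ⟨j, -, rfl⟩)
    exacts [normalize_gammaVec_mem_of_isClosed hK hC hv, hv j]

section LexLE

variable {α : Type*} [LT α]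

/-- The lexicographic order on finite words in which the end of a word is larger than every letter:
`LexLE v u` says that `u` is a prefix of `v` or that `v` is smaller at the first difference. -/
inductive LexLE : List α → List α → Prop
  | nil (v : List α) : LexLE v []
  | lt {b a : α} (h : b < a) (v u : List α) : LexLE (b :: v) (a :: u)
  | cons (a : α) {v u : List α} : LexLE v u → LexLE (a :: v) (a :: u)

theorem LexLE.append_left {v u : List α} (h : LexLE v u) : ∀ p : List α, LexLE (p ++ v) (p ++ u)
  | [] => h
  | a :: p => .cons a (h.append_left p)

theorem lexLE_append_self (u v : List α) : LexLE (u ++ v) u := by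
  simpa using (LexLE.nil v).append_left u

theorem prefix_or_lexLE_replicate_zero (N : ℕ) (u : List (Fin 3)) :
    List.replicate N 0 <+: u ∨ LexLE (List.replicate N 0) u := by
  induction N generalizing u with
  | zero => exact .inl List.nil_prefix
  | succ N ih =>
    rcases u with _ | ⟨a, u⟩
    · exact .inr (.nil _)
    rw [List.replicate_succ]
    rcases eq_or_ne a 0 with rfl | ha
    · exact (ih u).imp (List.cons_prefix_cons.2 ⟨rfl, ·⟩) (.cons 0)
    · exact .inr (.lt (Fin.pos_of_ne_zero ha) _ _)

end LexLE

section WordCut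

/-- A lower set of words that separates the words `1` and `2`. The set of words that are smaller
than a given sequence with initial letter `2` is the motivating example. -/
structure IsWordCut (Q : Set (List (Fin 3))) : Prop where
  mem_of_lexLE : ∀ {v u}, LexLE v u → u ∈ Q → v ∈ Q
  one_mem : [1] ∈ Q
  two_notMem : [2] ∉ Q

/-- A word is admissible for `Q` if all its nonempty suffixes belong to `Q`. -/
def IsAdmissible (Q : Set (List (Fin 3))) (u : List (Fin 3)) : Prop :=
  ∀ v, v <:+ u → v ≠ [] → v ∈ Q

variable {Q : Set (List (Fin 3))} {u v : List (Fin 3)}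

theorem isAdmissible_nil : IsAdmissible Q [] :=
  fun _ hv hne => absurd (List.suffix_nil.1 hv) hne

theorem isAdmissible_cons {a : Fin 3} :
    IsAdmissible Q (a :: u) ↔ a :: u ∈ Q ∧ IsAdmissible Q u := by
  constructor
  · exact fun h => ⟨h _ List.suffix_rfl (List.cons_ne_nil _ _),
      fun v hv => h v (hv.trans (List.suffix_cons a u))⟩
  · rintro ⟨hau, hu⟩ v hv hne
    rcases List.suffix_cons_iff.1 hv with rfl | hv
    exacts [hau, hu v hv hne]

namespace IsWordCut

variable (hQ : IsWordCut Q)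

include hQ

theorem cons_mem {a : Fin 3} (ha : a ≠ 2) (u : List (Fin 3)) : a :: u ∈ Q := by
  rcases (show a = 0 ∨ a = 1 by lia) with rfl | rfl
  · exact hQ.mem_of_lexLE (.lt (by decide) _ _) hQ.one_mem
  · exact hQ.mem_of_lexLE (.cons 1 (.nil u)) hQ.one_mem

theorem isAdmissible_append (hu : IsAdmissible Q u) (hv : IsAdmissible Q v) :
    IsAdmissible Q (u ++ v) := by
  induction u with
  | nil => exact hv
  | cons a u ih =>
    rw [isAdmissible_cons] at hu
    exact isAdmissible_cons.2 ⟨hQ.mem_of_lexLE (lexLE_append_self (a :: u) v) hu.1, ih hu.2⟩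

theorem isAdmissible_replicate_zero_append (hv : IsAdmissible Q v) (m : ℕ) :
    IsAdmissible Q (List.replicate m 0 ++ v) := by
  induction m with
  | zero => exact hv
  | succ m ih => exact isAdmissible_cons.2 ⟨hQ.cons_mem (by decide) _, ih⟩

theorem replicate_zero_prefix_of_two_cons_mem {N : ℕ} (hN : 2 :: List.replicate N 0 ∉ Q)
    (hu : 2 :: u ∈ Q) : List.replicate N 0 <+: u :=
  (prefix_or_lexLE_replicate_zero N u).resolve_right
    fun h => hN (hQ.mem_of_lexLE (.cons 2 h) hu)

end IsWordCut

end WordCut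

section DigitCount

/-- The vector of the numbers of occurrences of the letters `0`, `1`, `2` in a word. -/
def digitCount (u : List (Fin 3)) : Fin 3 → ℝ := fun i => u.count i

theorem digitCount_nil : digitCount [] = 0 := by
  ext i
  simp [digitCount]

theorem digitCount_append (u v : List (Fin 3)) :
    digitCount (u ++ v) = digitCount u + digitCount v := by
  ext i
  simp [digitCount]

theorem digitCount_cons (a : Fin 3) (u : List (Fin 3)) :
    digitCount (a :: u) = Pi.single a 1 + digitCount u := by
  ext i
  simp [digitCount, List.count_cons, Pi.single_apply, add_comm, @eq_comm _ a]

theorem digitCount_replicate_zero (m : ℕ) :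
    digitCount (List.replicate m 0) = (m : ℝ) • Pi.single 0 1 := by
  ext i
  fin_cases i <;> simp [digitCount, List.count_replicate]

theorem digitCount_nonneg (u : List (Fin 3)) : 0 ≤ digitCount u :=
  fun _ => Nat.cast_nonneg _

theorem coordSum_digitCount (u : List (Fin 3)) : coordSum (digitCount u) = u.length := by
  induction u with
  | nil => simp [digitCount_nil]
  | cons a u ih =>
    rw [digitCount_cons, map_add, ih, add_comm, List.length_cons, Nat.cast_add_one]
    fin_cases a <;> simp [coordSum_apply]

end DigitCount

section Subst

/-- The image of a letter under the substitution `0 ↦ 1`, `1 ↦ 2 0ⁿ⁺¹`, `2 ↦ 2 0ⁿ`. -/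
def substLetter (n : ℕ) : Fin 3 → List (Fin 3) :=
  ![[1], 2 :: List.replicate (n + 1) 0, 2 :: List.replicate n 0]

/-- The substitution `0 ↦ 1`, `1 ↦ 2 0ⁿ⁺¹`, `2 ↦ 2 0ⁿ`. -/
def subst (n : ℕ) (u : List (Fin 3)) : List (Fin 3) := u.flatMap (substLetter n)

variable (n : ℕ) (u : List (Fin 3))

theorem subst_nil : subst n [] = [] := rfl

theorem subst_cons (a : Fin 3) : subst n (a :: u) = substLetter n a ++ subst n u := rfl

theorem subst_zero_cons : subst n (0 :: u) = 1 :: subst n u := rfl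

theorem subst_one_cons : subst n (1 :: u) = 2 :: (List.replicate (n + 1) 0 ++ subst n u) := rfl

theorem subst_two_cons : subst n (2 :: u) = 2 :: (List.replicate n 0 ++ subst n u) := rfl

theorem subst_eq_nil_or : subst n u = [] ∨ ∃ a ≠ 0, ∃ v, subst n u = a :: v := by
  rcases u with _ | ⟨a, u⟩
  · exact .inl rfl
  right
  fin_cases a
  exacts [⟨1, by decide, _, subst_zero_cons n u⟩, ⟨2, by decide, _, subst_one_cons n u⟩,
    ⟨2, by decide, _, subst_two_cons n u⟩]

theorem lexLE_zero_cons_subst (v : List (Fin 3)) : LexLE (0 :: v) (subst n u) := by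
  rcases subst_eq_nil_or n u with h | ⟨a, ha, w, h⟩
  · exact h ▸ .nil _
  · exact h ▸ .lt (Fin.pos_of_ne_zero ha) _ _

theorem subst_lexLE_subst {v u : List (Fin 3)} (h : LexLE v u) : LexLE (subst n v) (subst n u) := by
  induction h with
  | nil v => exact .nil _
  | @lt b a hba v u =>
    obtain ⟨rfl, rfl⟩ | ⟨rfl, ha⟩ : b = 1 ∧ a = 2 ∨ b = 0 ∧ (a = 1 ∨ a = 2) := by lia
    · rw [subst_one_cons, subst_two_cons, List.replicate_succ', List.append_assoc]
      exact .cons 2 ((lexLE_zero_cons_subst n u _).append_left _)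
    · rcases ha with rfl | rfl <;> exact .lt (by decide) _ _
  | cons a _ ih => exact ih.append_left _

theorem digitCount_substLetter (a : Fin 3) :
    digitCount (substLetter n a) = abelSubst n (Pi.single a 1) := by
  ext i
  fin_cases a <;> fin_cases i <;>
    simp [digitCount, substLetter, abelSubst_apply, List.count_replicate]

theorem digitCount_subst : digitCount (subst n u) = abelSubst n (digitCount u) := by
  induction u with
  | nil => rw [subst_nil, digitCount_nil, map_zero]
  | cons a u ih =>
    rw [subst_cons, digitCount_append, digitCount_cons, map_add, ih, digitCount_substLetter]

theorem le_of_replicate_append_subst_lexLE {n c N : ℕ} {t v : List (Fin 3)}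
    (h : LexLE (List.replicate c 0 ++ subst n t) (List.replicate N 0 ++ v)) : N ≤ c := by
  induction N generalizing c with
  | zero => exact c.zero_le
  | succ N ih =>
    rcases c with _ | c
    · rw [List.replicate_zero, List.nil_append] at h
      rcases subst_eq_nil_or n t with ht | ⟨a, ha, w, ht⟩ <;> rw [ht] at h <;> cases h <;> simp_all
    · cases h with
      | lt h => exact absurd h (lt_irrefl _)
      | cons _ h => exact Nat.succ_le_succ (ih h)

end Subst

section Renormalization

/-- A set of words is renormalizable if it contains some `2 0ⁿ⁺¹`. -/
def IsRenormalizable (Q : Set (List (Fin 3))) : Prop := ∃ n, 2 :: List.replicate (n + 1) 0 ∈ Q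

/-- The least `n` with `2 0ⁿ⁺¹ ∈ Q`, and `0` if there is none. -/
noncomputable def exponent (Q : Set (List (Fin 3))) : ℕ :=
  sInf {n | 2 :: List.replicate (n + 1) 0 ∈ Q}

/-- The words whose image under the substitution with exponent `exponent Q` lies in `Q`. -/
def derivedCut (Q : Set (List (Fin 3))) : Set (List (Fin 3)) := subst (exponent Q) ⁻¹' Q

variable {Q : Set (List (Fin 3))} {t u : List (Fin 3)}

theorem IsRenormalizable.two_cons_mem (hren : IsRenormalizable Q) :
    2 :: List.replicate (exponent Q + 1) 0 ∈ Q := Nat.sInf_mem hren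

namespace IsWordCut

variable (hQ : IsWordCut Q)

include hQ

theorem two_cons_replicate_exponent_notMem : 2 :: List.replicate (exponent Q) 0 ∉ Q := by
  rcases h : exponent Q with _ | m
  · exact hQ.two_notMem
  · exact Nat.notMem_of_lt_sInf (s := {n | 2 :: List.replicate (n + 1) 0 ∈ Q})
      (h ▸ m.lt_succ_self : m < exponent Q)

theorem isWordCut_derivedCut (hren : IsRenormalizable Q) : IsWordCut (derivedCut Q) where
  mem_of_lexLE h := hQ.mem_of_lexLE (subst_lexLE_subst _ h)
  one_mem := by simpa [derivedCut, subst_one_cons, subst_nil] using hren.two_cons_mem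
  two_notMem := by
    simpa [derivedCut, subst_two_cons, subst_nil]
      using hQ.two_cons_replicate_exponent_notMem

theorem isAdmissible_subst (ht : IsAdmissible (derivedCut Q) t) :
    IsAdmissible Q (subst (exponent Q) t) := by
  induction t with
  | nil => exact isAdmissible_nil
  | cons a t ih =>
    rw [isAdmissible_cons] at ht
    obtain ⟨hmem, ht⟩ := ht
    fin_cases a
    · exact isAdmissible_cons.2 ⟨hmem, ih ht⟩
    · exact isAdmissible_cons.2 ⟨hmem, hQ.isAdmissible_replicate_zero_append (ih ht) _⟩
    · exact isAdmissible_cons.2 ⟨hmem, hQ.isAdmissible_replicate_zero_append (ih ht) _⟩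

end IsWordCut

/-- The word `u` desubstitutes to `t` with `c` superfluous zeros. Read from the right, an admissible
word splits into blocks `1`, `2 0ⁿ⁺¹`, `2 0ⁿ` and superfluous zeros, and moving the latter to the
front only decreases the word. -/
structure IsDesubst (Q : Set (List (Fin 3))) (u t : List (Fin 3)) (c : ℕ) : Prop where
  isAdmissible : IsAdmissible (derivedCut Q) t
  lexLE : LexLE (List.replicate c 0 ++ subst (exponent Q) t) u
  digitCount_eq :
    digitCount u = abelSubst (exponent Q) (digitCount t) + (c : ℝ) • Pi.single 0 1

namespace IsDesubst

variable {c : ℕ} (h : IsDesubst Q u t c)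

include h

theorem zero_cons : IsDesubst Q (0 :: u) t (c + 1) := by
  refine ⟨h.isAdmissible, .cons 0 h.lexLE, ?_⟩
  rw [digitCount_cons, h.digitCount_eq]
  push_cast
  module

theorem one_cons (hcut : IsWordCut (derivedCut Q)) : IsDesubst Q (1 :: u) (0 :: t) c := by
  refine ⟨isAdmissible_cons.2 ⟨hcut.cons_mem (by decide) t, h.isAdmissible⟩, ?_, ?_⟩
  · rcases c with _ | c
    exacts [.cons 1 h.lexLE, .lt (by decide) _ _]
  · rw [digitCount_cons, h.digitCount_eq, ← digitCount_subst, ← digitCount_subst, subst_zero_cons,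
      digitCount_cons, add_assoc]

theorem exists_two_cons (hQ : IsWordCut Q) (hcut : IsWordCut (derivedCut Q)) (hmem : 2 :: u ∈ Q) :
    ∃ t' c', IsDesubst Q (2 :: u) t' c' := by
  obtain ⟨v, rfl⟩ := hQ.replicate_zero_prefix_of_two_cons_mem
    hQ.two_cons_replicate_exponent_notMem hmem
  obtain ⟨d, rfl⟩ := Nat.exists_eq_add_of_le (le_of_replicate_append_subst_lexLE h.lexLE)
  rcases d with _ | d
  · refine ⟨2 :: t, 0, isAdmissible_cons.2 ⟨hQ.mem_of_lexLE (.cons 2 h.lexLE) hmem,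
      h.isAdmissible⟩, .cons 2 h.lexLE, ?_⟩
    rw [digitCount_cons, h.digitCount_eq, ← digitCount_subst, ← digitCount_subst, subst_two_cons,
      digitCount_cons, digitCount_append, digitCount_replicate_zero]
    push_cast
    module
  · refine ⟨1 :: t, d, isAdmissible_cons.2 ⟨hcut.cons_mem (by decide) t, h.isAdmissible⟩, ?_, ?_⟩
    · rcases d with _ | d
      exacts [.cons 2 h.lexLE, .lt (by decide) _ _]
    · rw [digitCount_cons, h.digitCount_eq, ← digitCount_subst, ← digitCount_subst, subst_one_cons,
        digitCount_cons, digitCount_append, digitCount_replicate_zero]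
      push_cast
      module

end IsDesubst

theorem IsWordCut.exists_isDesubst (hQ : IsWordCut Q) (hren : IsRenormalizable Q)
    (hu : IsAdmissible Q u) : ∃ t c, IsDesubst Q u t c := by
  have hcut := hQ.isWordCut_derivedCut hren
  induction u with
  | nil => exact ⟨[], 0, isAdmissible_nil, .nil _, by simp [digitCount_nil]⟩
  | cons a u ih =>
    rw [isAdmissible_cons] at hu
    obtain ⟨t, c, h⟩ := ih hu.2
    obtain rfl | rfl | rfl : a = 0 ∨ a = 1 ∨ a = 2 := by lia
    exacts [⟨_, _, h.zero_cons⟩, ⟨_, _, h.one_cons hcut⟩, h.exists_two_cons hQ hcut hu.1]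

theorem IsWordCut.digitCount_two_eq_zero (hQ : IsWordCut Q) (hren : ¬ IsRenormalizable Q)
    (hu : IsAdmissible Q u) : digitCount u 2 = 0 := by
  suffices 2 ∉ u by simpa [digitCount, List.count_eq_zero] using this
  intro h2
  obtain ⟨p, v, rfl⟩ := List.append_of_mem h2
  have hv : 2 :: v ∈ Q := hu _ (List.suffix_append _ _) (List.cons_ne_nil _ _)
  have hlen := (hQ.replicate_zero_prefix_of_two_cons_mem (not_exists.1 hren v.length) hv).length_le
  simp at hlen

end Renormalization

section DerivedSequence

/-- The exponents of the iterated derived cuts. -/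
noncomputable def exponentSeq (Q : Set (List (Fin 3))) (k : ℕ) : ℕ := exponent (derivedCut^[k] Q)

variable {Q : Set (List (Fin 3))} {t u : List (Fin 3)} {k : ℕ}

theorem IsWordCut.iterate_derivedCut (hQ : IsWordCut Q)
    (hren : ∀ j < k, IsRenormalizable (derivedCut^[j] Q)) : IsWordCut (derivedCut^[k] Q) := by
  induction k with
  | zero => exact hQ
  | succ k ih =>
    rw [Function.iterate_succ_apply']
    exact (ih fun j hj => hren j (by lia)).isWordCut_derivedCut (hren k (by lia))

variable (hQ : IsWordCut Q) (hren : ∀ j < k, IsRenormalizable (derivedCut^[j] Q))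

include hQ hren

theorem exists_digitCount_eq_abelSubstIter (ht : IsAdmissible (derivedCut^[k] Q) t) :
    ∃ u, IsAdmissible Q u ∧ digitCount u = abelSubstIter (exponentSeq Q) k (digitCount t) := by
  induction k generalizing t with
  | zero => exact ⟨t, ht, rfl⟩
  | succ k ih =>
    rw [Function.iterate_succ_apply'] at ht
    have hren' : ∀ j < k, IsRenormalizable (derivedCut^[j] Q) := fun j hj => hren j (by lia)
    obtain ⟨u, hu, hcount⟩ := ih hren' ((hQ.iterate_derivedCut hren').isAdmissible_subst ht)
    exact ⟨u, hu, by rw [hcount, digitCount_subst]; rfl⟩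

theorem exists_digitCount_eq_betaVec :
    (∃ u, IsAdmissible Q u ∧ digitCount u = betaVec (exponentSeq Q) k) ∧
      ∃ u, IsAdmissible Q u ∧ digitCount u = betaVec (exponentSeq Q) (k + 1) := by
  have hletter : ∀ a : Fin 3, a ≠ 2 →
      ∃ u, IsAdmissible Q u ∧ digitCount u = abelSubstIter (exponentSeq Q) k (digitCount [a]) :=
    fun a ha => exists_digitCount_eq_abelSubstIter hQ hren
      (isAdmissible_cons.2 ⟨(hQ.iterate_derivedCut hren).cons_mem ha _, isAdmissible_nil⟩)
  have h0 : digitCount [0] = ![1, 0, 0] := by ext i; fin_cases i <;> simp [digitCount]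
  have h1 : digitCount [1] = ![0, 1, 0] := by ext i; fin_cases i <;> simp [digitCount]
  rw [betaVec_succ, betaVec, ← h0, ← h1]
  exact ⟨hletter 0 (by decide), hletter 1 (by decide)⟩

-- Only inequalities survive, because superfluous zeros are discarded at every step.
theorem exists_isAdmissible_iterate_derivedCut (hu : IsAdmissible Q u) :
    ∃ t, IsAdmissible (derivedCut^[k] Q) t ∧
      digitCount t 0 ≤ (abelSubstIter (exponentSeq Q) k).symm (digitCount u) 0 ∧
      digitCount t 1 ≤ (abelSubstIter (exponentSeq Q) k).symm (digitCount u) 1 ∧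
      (abelSubstIter (exponentSeq Q) k).symm (digitCount u) 2 ≤ digitCount t 2 := by
  induction k with
  | zero => exact ⟨u, hu, le_rfl, le_rfl, le_rfl⟩
  | succ k ih =>
    have hren' : ∀ j < k, IsRenormalizable (derivedCut^[j] Q) := fun j hj => hren j (by lia)
    obtain ⟨s, hs, h0, h1, h2⟩ := ih hren'
    obtain ⟨t, c, ht⟩ := (hQ.iterate_derivedCut hren').exists_isDesubst (hren k (by lia)) hs
    rw [Function.iterate_succ_apply']
    refine ⟨t, ht.isAdmissible, ?_⟩
    set x := (abelSubstIter (exponentSeq Q) k).symm (digitCount u)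
    have e := ht.digitCount_eq
    rw [abelSubst_apply, ← exponentSeq] at e
    have e0 : digitCount s 0 = (exponentSeq Q k + 1) * digitCount t 1 +
        exponentSeq Q k * digitCount t 2 + c := by simp [e]
    have e1 : digitCount s 1 = digitCount t 0 := by simp [e]
    have e2 : digitCount s 2 = digitCount t 1 + digitCount t 2 := by simp [e]
    have hc : (0 : ℝ) ≤ c := c.cast_nonneg
    have hn2 := mul_le_mul_of_nonneg_left h2 (Nat.cast_nonneg (α := ℝ) (exponentSeq Q k))
    rw [e2] at h2 hn2
    have hx1 : digitCount t 1 ≤ x 0 - exponentSeq Q k * x 2 := by linarith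
    exact ⟨e1 ▸ h1, hx1, show x 2 - (x 0 - exponentSeq Q k * x 2) ≤ digitCount t 2 by linarith⟩

theorem betaCoord_digitCount_nonneg (hu : IsAdmissible Q u) :
    0 ≤ betaCoord (exponentSeq Q) k (digitCount u) ∧
      0 ≤ betaCoord (exponentSeq Q) (k + 1) (digitCount u) := by
  obtain ⟨t, -, h0, h1, -⟩ := exists_isAdmissible_iterate_derivedCut hQ hren hu
  exact ⟨(digitCount_nonneg t 0).trans h0, (digitCount_nonneg t 1).trans h1⟩

theorem gammaCoord_digitCount_nonpos (hk : ¬ IsRenormalizable (derivedCut^[k] Q))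
    (hu : IsAdmissible Q u) : gammaCoord (exponentSeq Q) k (digitCount u) ≤ 0 := by
  obtain ⟨t, ht, -, -, h2⟩ := exists_isAdmissible_iterate_derivedCut hQ hren hu
  exact h2.trans_eq ((hQ.iterate_derivedCut hren).digitCount_two_eq_zero hk ht)

end DerivedSequence

section WordFreqSet

/-- The digit frequency vectors of the nonempty admissible words. -/
def wordFreqSet (Q : Set (List (Fin 3))) : Set (Fin 3 → ℝ) :=
  (fun u => normalize (digitCount u)) '' {u | IsAdmissible Q u ∧ u ≠ []}

variable {Q : Set (List (Fin 3))} {u v : List (Fin 3)}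

theorem coordSum_digitCount_pos (hu : u ≠ []) : 0 < coordSum (digitCount u) := by
  rw [coordSum_digitCount]
  exact_mod_cast List.length_pos_iff.2 hu

theorem normalize_mem_wordFreqSet {x : Fin 3 → ℝ} (hx : 0 < coordSum x) (hu : IsAdmissible Q u)
    (hux : digitCount u = x) : normalize x ∈ wordFreqSet Q := by
  refine ⟨u, ⟨hu, ?_⟩, congrArg normalize hux⟩
  rintro rfl
  simp [← hux, digitCount_nil] at hx

theorem continuousAt_normalize {x : Fin 3 → ℝ} (hx : coordSum x ≠ 0) : ContinuousAt normalize x :=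
  (coordSum.continuous_of_finiteDimensional.continuousAt.inv₀ hx).smul continuousAt_id

theorem digitCount_flatten_replicate (m : ℕ) (u : List (Fin 3)) :
    digitCount (List.replicate m u).flatten = (m : ℝ) • digitCount u := by
  induction m with
  | zero => simp [digitCount_nil]
  | succ m ih =>
    rw [List.replicate_succ, List.flatten_cons, digitCount_append, ih]
    push_cast
    module

theorem IsWordCut.isAdmissible_flatten_replicate (hQ : IsWordCut Q) (hu : IsAdmissible Q u)
    (m : ℕ) : IsAdmissible Q (List.replicate m u).flatten := by
  induction m with
  | zero => exact isAdmissible_nil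
  | succ m ih => exact hQ.isAdmissible_append hu ih

theorem IsWordCut.normalize_mem_closure_wordFreqSet (hQ : IsWordCut Q) (hu : IsAdmissible Q u)
    (hv : IsAdmissible Q v) {s t : ℝ} (hs : 0 ≤ s) (ht : 0 ≤ t)
    (hpos : 0 < coordSum (s • digitCount u + t • digitCount v)) :
    normalize (s • digitCount u + t • digitCount v) ∈ closure (wordFreqSet Q) := by
  have hfloor : ∀ r : ℝ, 0 ≤ r → Tendsto (fun q : ℕ => (⌊r * q⌋₊ / q : ℝ)) atTop (𝓝 r) :=
    fun r hr => (tendsto_nat_floor_mul_div_atTop hr).comp tendsto_natCast_atTop_atTop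
  have hlim : Tendsto (fun q : ℕ => (⌊s * q⌋₊ / q : ℝ) • digitCount u +
      (⌊t * q⌋₊ / q : ℝ) • digitCount v) atTop (𝓝 (s • digitCount u + t • digitCount v)) :=
    ((hfloor s hs).smul_const _).add ((hfloor t ht).smul_const _)
  refine mem_closure_of_tendsto ((continuousAt_normalize hpos.ne').tendsto.comp hlim) ?_
  filter_upwards [eventually_gt_atTop 0,
    (coordSum.continuous_of_finiteDimensional.tendsto _).comp hlim |>.eventually_const_lt hpos]
    with q hq hqpos
  have hq' : (0 : ℝ) < q := Nat.cast_pos.2 hq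
  rw [Function.comp_apply, ← normalize_smul hq'.ne']
  refine normalize_mem_wordFreqSet (u := (List.replicate ⌊s * q⌋₊ u).flatten ++
      (List.replicate ⌊t * q⌋₊ v).flatten) ?_
    (hQ.isAdmissible_append (hQ.isAdmissible_flatten_replicate hu _)
      (hQ.isAdmissible_flatten_replicate hv _)) ?_
  · rw [map_smul]
    exact mul_pos hq' hqpos
  · rw [digitCount_append, digitCount_flatten_replicate, digitCount_flatten_replicate, smul_add,
      smul_smul, smul_smul, mul_div_cancel₀ _ hq'.ne', mul_div_cancel₀ _ hq'.ne']

theorem IsWordCut.convex_closure_wordFreqSet (hQ : IsWordCut Q) :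
    Convex ℝ (closure (wordFreqSet Q)) := by
  intro x hx y hy a b ha hb hab
  rw [← closure_closure]
  refine map_mem_closure₂ (f := fun x y => a • x + b • y) (by fun_prop) hx hy ?_
  rintro _ ⟨u, ⟨hu, hune⟩, rfl⟩ _ ⟨v, ⟨hv, hvne⟩, rfl⟩
  have hu0 := coordSum_digitCount_pos hune
  have hv0 := coordSum_digitCount_pos hvne
  have hsum : coordSum (a • normalize (digitCount u) + b • normalize (digitCount v)) = 1 := by
    simp [coordSum_normalize hu0.ne', coordSum_normalize hv0.ne', hab]
  change a • normalize (digitCount u) + b • normalize (digitCount v) ∈ _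
  rw [← normalize_of_coordSum_eq_one hsum]
  rw [normalize.eq_def (digitCount u), normalize.eq_def (digitCount v), smul_smul, smul_smul]
    at hsum ⊢
  exact hQ.normalize_mem_closure_wordFreqSet hu hv (by positivity) (by positivity)
    (hsum ▸ one_pos)

end WordFreqSet

section Classification

variable {Q : Set (List (Fin 3))} (hQ : IsWordCut Q)

include hQ

theorem vertex_mem_wordFreqSet {k : ℕ} (hren : ∀ j < k, IsRenormalizable (derivedCut^[j] Q)) :
    vertex (exponentSeq Q) k ∈ wordFreqSet Q ∧ vertex (exponentSeq Q) (k + 1) ∈ wordFreqSet Q := by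
  obtain ⟨⟨u, hu, hcount⟩, u', hu', hcount'⟩ := exists_digitCount_eq_betaVec hQ hren
  exact ⟨normalize_mem_wordFreqSet (coordSum_betaVec_pos _ _) hu hcount,
    normalize_mem_wordFreqSet (coordSum_betaVec_pos _ _) hu' hcount'⟩

theorem closure_wordFreqSet_eq_freqBody (hren : ∀ k, IsRenormalizable (derivedCut^[k] Q)) :
    closure (wordFreqSet Q) = freqBody (exponentSeq Q) := by
  refine Set.Subset.antisymm (closure_minimal ?_ (isClosed_freqBody _))
    (freqBody_subset_of_isClosed_of_convex isClosed_closure hQ.convex_closure_wordFreqSet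
      fun k => subset_closure (vertex_mem_wordFreqSet hQ fun j _ => hren j).1)
  rintro _ ⟨u, ⟨hu, hne⟩, rfl⟩
  have hpos := coordSum_digitCount_pos hne
  have hinv := (inv_pos.2 hpos).le
  refine ⟨coordSum_normalize hpos.ne', mul_nonneg hinv (digitCount_nonneg u 2), fun k => ?_⟩
  simp only [normalize, map_smul]
  exact mul_nonneg hinv (betaCoord_digitCount_nonneg hQ (fun j _ => hren j) hu).1

theorem closure_wordFreqSet_eq_convexHull {k : ℕ}
    (hren : ∀ j < k, IsRenormalizable (derivedCut^[j] Q))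
    (hk : ¬ IsRenormalizable (derivedCut^[k] Q)) :
    closure (wordFreqSet Q) = convexHull ℝ (vertex (exponentSeq Q) '' Set.Iic (k + 1)) := by
  set A := vertex (exponentSeq Q) '' Set.Iic (k + 1)
  have hA : A.Finite := (Set.finite_Iic _).image _
  refine Set.Subset.antisymm (closure_minimal ?_ (hA.isClosed_convexHull _))
    (convexHull_min ?_ hQ.convex_closure_wordFreqSet)
  · rintro _ ⟨u, ⟨hu, hne⟩, rfl⟩
    have hpos := coordSum_digitCount_pos hne
    have hinv := (inv_pos.2 hpos).le
    refine mem_of_gammaCoord_nonpos (n := exponentSeq Q) (k := k) (convex_convexHull ℝ A)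
      (fun j hj => subset_convexHull ℝ A (Set.mem_image_of_mem _ hj)) (coordSum_normalize hpos.ne')
      (mul_nonneg hinv (digitCount_nonneg u 2)) (fun j hj => ?_) ?_
    all_goals simp only [normalize, map_smul]
    · refine mul_nonneg hinv ?_
      rcases hj.lt_or_eq with hj | rfl
      · exact (betaCoord_digitCount_nonneg hQ (fun i hi => hren i (by lia)) hu).1
      · exact (betaCoord_digitCount_nonneg hQ hren hu).2
    · exact mul_nonpos_of_nonneg_of_nonpos hinv (gammaCoord_digitCount_nonpos hQ hren hk hu)
  · rintro _ ⟨j, hj, rfl⟩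
    refine subset_closure ?_
    rcases (Set.mem_Iic.1 hj).lt_or_eq with hj | rfl
    · exact (vertex_mem_wordFreqSet hQ fun i hi => hren i (by lia)).1
    · exact (vertex_mem_wordFreqSet hQ hren).2

theorem isRationalPolytope_or_closure_wordFreqSet_eq_freqBody :
    IsRationalPolytope (closure (wordFreqSet Q)) ∨
      ∃ n : ℕ → ℕ, (∃ᶠ k in atTop, n k ≠ 0) ∧ closure (wordFreqSet Q) = freqBody n := by
  classical
  by_cases hren : ∀ k, IsRenormalizable (derivedCut^[k] Q)
  · rw [closure_wordFreqSet_eq_freqBody hQ hren]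
    by_cases hn : ∃ᶠ k in atTop, exponentSeq Q k ≠ 0
    · exact .inr ⟨_, hn, rfl⟩
    · obtain ⟨K, hK⟩ : ∃ K, ∀ k ≥ K, exponentSeq Q k = 0 := by simpa using hn
      exact .inl (isRationalPolytope_freqBody hK)
  · push Not at hren
    rw [closure_wordFreqSet_eq_convexHull hQ (fun j hj => not_not.1 (Nat.find_min hren hj))
      (Nat.find_spec hren)]
    refine .inl (isRationalPolytope_convexHull ((Set.finite_Iic _).image _) ?_)
    rintro _ ⟨j, -, rfl⟩
    exact isRat_vertex _ j

end Classification

section PrefixWord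

variable {α : Type*}

/-- The word formed by the first `r` letters of a sequence. -/
def prefixWord (s : ℕ → α) (r : ℕ) : List α := (List.range r).map s

theorem length_prefixWord (s : ℕ → α) (r : ℕ) : (prefixWord s r).length = r := by
  simp [prefixWord]

theorem prefixWord_succ (s : Seq3) (r : ℕ) :
    prefixWord s (r + 1) = s 0 :: prefixWord (shift s) r := by
  simp [prefixWord, List.range_succ_eq_map, shift, Function.comp_def]

theorem shift_iterate_apply (s : Seq3) (r i : ℕ) : shift^[r] s i = s (r + i) := by
  induction r generalizing s with
  | zero => simp
  | succ r ih => rw [Function.iterate_succ_apply, ih, shift, add_right_comm]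

theorem drop_prefixWord (s : Seq3) (n r : ℕ) :
    (prefixWord s n).drop r = prefixWord (shift^[r] s) (n - r) := by
  apply List.ext_getElem
  · simp [prefixWord]
  · simp [prefixWord, shift_iterate_apply]

theorem birk_succ (s : Seq3) (r : ℕ) : birk s (r + 1) = kappa s + birk (shift s) r := by
  simp [birk, Finset.sum_range_succ', add_comm]

theorem kappa_eq_single (s : Seq3) : kappa s = Pi.single (s 0) 1 := by
  ext i
  simp [kappa, Pi.single_apply]

theorem digitCount_prefixWord (s : Seq3) (r : ℕ) : digitCount (prefixWord s r) = birk s r := by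
  induction r generalizing s with
  | zero => simp [prefixWord, birk, digitCount_nil]
  | succ r ih => rw [prefixWord_succ, digitCount_cons, ih, birk_succ, kappa_eq_single]

end PrefixWord

section Below

theorem lexLe_iff (s w : Seq3) :
    lexLe s w ↔ s 0 < w 0 ∨ s 0 = w 0 ∧ lexLe (shift s) (shift w) := by
  constructor
  · rintro (rfl | ⟨_ | n, heq, hlt⟩)
    · exact .inr ⟨rfl, .inl rfl⟩
    · exact .inl hlt
    · exact .inr ⟨heq 0 n.succ_pos, .inr ⟨n, fun i hi => heq (i + 1) (by lia), hlt⟩⟩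
  · rintro (hlt | ⟨h0, heq | ⟨n, heq, hlt⟩⟩)
    · exact .inr ⟨0, by simp, hlt⟩
    · left
      ext (_ | i)
      exacts [congrArg _ h0, congrArg _ (congrFun heq i)]
    · refine .inr ⟨n + 1, ?_, hlt⟩
      rintro (_ | i) hi
      exacts [h0, heq i (by lia)]

/-- The word `u` differs from the sequence `w`, and it is smaller at the first difference. -/
def IsBelow : List (Fin 3) → Seq3 → Prop
  | [], _ => False
  | a :: u, w => a < w 0 ∨ a = w 0 ∧ IsBelow u (shift w)

/-- The word `u` is a prefix of the sequence `w`, or it is smaller at the first difference. -/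
def IsWeaklyBelow : List (Fin 3) → Seq3 → Prop
  | [], _ => True
  | a :: u, w => a < w 0 ∨ a = w 0 ∧ IsWeaklyBelow u (shift w)

theorem IsBelow.of_lexLE {v u : List (Fin 3)} (h : LexLE v u) {w : Seq3} (hu : IsBelow u w) :
    IsBelow v w := by
  induction h generalizing w with
  | nil => exact hu.elim
  | lt hba => exact .inl (hu.elim hba.trans fun h => h.1 ▸ hba)
  | cons a _ ih => exact hu.imp_right (And.imp_right ih)

theorem isWordCut_isBelow {w : Seq3} (hw : w 0 = 2) : IsWordCut {u | IsBelow u w} where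
  mem_of_lexLE h hu := IsBelow.of_lexLE h hu
  one_mem := .inl (hw ▸ by decide)
  two_notMem := by simp [IsBelow, hw]

theorem lexLe_of_isBelow_prefixWord {s w : Seq3} {r : ℕ} (h : IsBelow (prefixWord s r) w) :
    lexLe s w := by
  induction r generalizing s w with
  | zero => exact h.elim
  | succ r ih =>
    rw [prefixWord_succ] at h
    exact (lexLe_iff s w).2 (h.imp_right (And.imp_right ih))

theorem isWeaklyBelow_prefixWord {s w : Seq3} (h : lexLe s w) (r : ℕ) :
    IsWeaklyBelow (prefixWord s r) w := by
  induction r generalizing s w with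
  | zero => trivial
  | succ r ih =>
    rw [prefixWord_succ]
    exact ((lexLe_iff s w).1 h).imp_right (And.imp_right ih)

theorem isWeaklyBelow_of_suffix_prefixWord {s w : Seq3} (hs : s ∈ BetaShift w) {r : ℕ}
    {v : List (Fin 3)} (hv : v <:+ prefixWord s r) : IsWeaklyBelow v w := by
  rw [List.suffix_iff_eq_drop.1 hv, drop_prefixWord]
  exact isWeaklyBelow_prefixWord (hs _) _

end Below

section DecrementLast

/-- The word obtained from `u` by decrementing its last nonzero letter, if there is one. -/
def decrementLast : List (Fin 3) → List (Fin 3)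
  | [] => []
  | a :: u => if ∀ b ∈ u, b = 0 then ![0, 0, 1] a :: u else a :: decrementLast u

variable {u : List (Fin 3)} {w : Seq3}

theorem length_decrementLast (u : List (Fin 3)) : (decrementLast u).length = u.length := by
  induction u with
  | nil => rfl
  | cons a u ih =>
    rw [decrementLast]
    split_ifs <;> simp [ih]

theorem norm_digitCount_decrementLast_sub_le (u : List (Fin 3)) :
    ‖digitCount (decrementLast u) - digitCount u‖ ≤ 1 := by
  induction u with
  | nil => simp [decrementLast]
  | cons a u ih =>
    rw [decrementLast]
    split_ifs
    · rw [digitCount_cons, digitCount_cons, add_sub_add_right_eq_sub,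
        pi_norm_le_iff_of_nonneg zero_le_one]
      intro i
      fin_cases a <;> fin_cases i <;> simp
    · rwa [digitCount_cons, digitCount_cons, add_sub_add_left_eq_sub]

theorem isBelow_decrementLast (hu : IsWeaklyBelow u w) (hne : ∃ a ∈ u, a ≠ 0) :
    IsBelow (decrementLast u) w := by
  induction u generalizing w with
  | nil => simp at hne
  | cons a u ih =>
    rw [decrementLast]
    split_ifs with hzero
    · have ha : a ≠ 0 := by
        obtain ⟨b, hb, hb0⟩ := hne
        rcases List.mem_cons.1 hb with rfl | hb
        exacts [hb0, absurd (hzero b hb) hb0]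
      have hpred : ∀ b : Fin 3, b ≠ 0 → (![0, 0, 1] : Fin 3 → Fin 3) b < b := by decide
      exact .inl (hu.elim (hpred a ha).trans fun h => h.1 ▸ hpred a ha)
    · push Not at hzero
      exact hu.imp_right (And.imp_right (ih · hzero))

theorem decrementLast_of_forall_eq_zero (hu : ∀ a ∈ u, a = 0) : decrementLast u = u := by
  rcases u with _ | ⟨a, u⟩
  · rfl
  · rw [decrementLast, if_pos fun b hb => hu b (List.mem_cons_of_mem a hb),
      hu a List.mem_cons_self]
    rfl

theorem isAdmissible_of_forall_eq_zero (hw : w 0 = 2) (hu : ∀ a ∈ u, a = 0) :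
    IsAdmissible {v | IsBelow v w} u := by
  rw [List.eq_replicate_of_mem hu, ← List.append_nil (List.replicate _ _)]
  exact (isWordCut_isBelow hw).isAdmissible_replicate_zero_append isAdmissible_nil _

theorem isAdmissible_decrementLast (hw : w 0 = 2) (hu : ∀ v, v <:+ u → IsWeaklyBelow v w) :
    IsAdmissible {v | IsBelow v w} (decrementLast u) := by
  by_cases hzero : ∀ a ∈ u, a = 0
  · rw [decrementLast_of_forall_eq_zero hzero]
    exact isAdmissible_of_forall_eq_zero hw hzero
  push Not at hzero
  induction u with
  | nil => exact isAdmissible_nil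
  | cons a u ih =>
    have hmem := isBelow_decrementLast (hu _ List.suffix_rfl) hzero
    rw [decrementLast] at hmem ⊢
    split_ifs at hmem ⊢ with htail
    · exact isAdmissible_cons.2 ⟨hmem, isAdmissible_of_forall_eq_zero hw htail⟩
    · push Not at htail
      exact isAdmissible_cons.2
        ⟨hmem, ih (fun v hv => hu v (hv.trans (List.suffix_cons a u))) htail⟩

end DecrementLast

theorem DF_subset_closure_wordFreqSet {w : Seq3} (hw : w 0 = 2) :
    DF w ⊆ closure (wordFreqSet {u | IsBelow u w}) := by
  rintro x ⟨s, hs, hlim⟩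
  let d := fun r => digitCount (decrementLast (prefixWord s r))
  have hsum : ∀ r, coordSum (d r) = r := fun r => by
    rw [coordSum_digitCount, length_decrementLast, length_prefixWord]
  have hdiff : Tendsto (fun r : ℕ => (r : ℝ)⁻¹ • (d r - birk s r)) atTop (𝓝 0) := by
    refine squeeze_zero_norm (fun r => ?_) tendsto_inv_atTop_nhds_zero_nat
    rw [norm_smul, norm_inv, Real.norm_natCast, ← digitCount_prefixWord]
    exact mul_le_of_le_one_right (by positivity) (norm_digitCount_decrementLast_sub_le _)
  have hd : Tendsto (fun r => normalize (d r)) atTop (𝓝 x) := by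
    refine (add_zero x ▸ hlim.add hdiff).congr fun r => ?_
    rw [normalize, hsum, ← smul_add, add_sub_cancel]
  refine mem_closure_of_tendsto hd ((eventually_gt_atTop 0).mono fun r hr => ?_)
  refine normalize_mem_wordFreqSet (by rw [hsum]; exact_mod_cast hr) ?_ rfl
  exact isAdmissible_decrementLast hw fun v hv => isWeaklyBelow_of_suffix_prefixWord hs hv

section Concat

variable {α : Type*} {g : ℕ → List α}

/-- The concatenation of the first `j` words of a sequence of words. -/
def concat (g : ℕ → List α) : ℕ → List α
  | 0 => []
  | j + 1 => concat g j ++ g j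

theorem concat_isPrefix {i j : ℕ} (hij : i ≤ j) : concat g i <+: concat g j := by
  induction hij with
  | refl => exact List.prefix_rfl
  | step _ ih => exact ih.trans (List.prefix_append _ _)

theorem length_concat (g : ℕ → List α) (j : ℕ) :
    (concat g j).length = ∑ i ∈ Finset.range j, (g i).length := by
  induction j with
  | zero => rfl
  | succ j ih => rw [concat, List.length_append, ih, Finset.sum_range_succ]

theorem le_length_concat (hg : ∀ j, g j ≠ []) (j : ℕ) : j ≤ (concat g j).length := by
  rw [length_concat]
  simpa using Finset.card_nsmul_le_sum (Finset.range j) (fun i => (g i).length) 1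
    fun i _ => List.length_pos_iff.2 (hg i)

theorem exists_forall_concat_eq_prefixWord (hg : ∀ j, g j ≠ []) :
    ∃ s : ℕ → α, ∀ j, concat g j = prefixWord s (concat g j).length := by
  refine ⟨fun i => (concat g (i + 1))[i]'(le_length_concat hg (i + 1)), fun j => ?_⟩
  refine List.ext_getElem (length_prefixWord _ _).symm fun i hi _ => ?_
  simp only [prefixWord, List.getElem_map, List.getElem_range]
  rcases le_total j (i + 1) with hij | hij
  · exact (concat_isPrefix hij).getElem hi
  · exact ((concat_isPrefix hij).getElem (le_length_concat hg (i + 1))).symm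

theorem exists_eq_concat_append_of_isPrefix {n : ℕ} {u : List α} (hu : u <+: concat g n) :
    ∃ j ≤ n, ∃ v, v <+: g j ∧ u = concat g j ++ v := by
  induction n with
  | zero => exact ⟨0, le_rfl, [], List.nil_prefix, List.prefix_nil.1 hu⟩
  | succ n ih =>
    rcases List.prefix_or_prefix_of_prefix hu (List.prefix_append (concat g n) (g n))
      with hun | ⟨v, rfl⟩
    · obtain ⟨j, hj, hsplit⟩ := ih hun
      exact ⟨j, hj.trans n.le_succ, hsplit⟩
    · exact ⟨n, n.le_succ, v, (List.prefix_append_right_inj _).1 hu, rfl⟩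

theorem prefixWord_isPrefix (s : ℕ → α) {m n : ℕ} (hmn : m ≤ n) :
    prefixWord s m <+: prefixWord s n :=
  (List.prefix_iff_eq_take.2 (by simp [List.take_range, hmn])).map s

theorem isAdmissible_concat {Q : Set (List (Fin 3))} (hQ : IsWordCut Q)
    {g : ℕ → List (Fin 3)} (hg : ∀ j, IsAdmissible Q (g j)) (j : ℕ) :
    IsAdmissible Q (concat g j) := by
  induction j with
  | zero => exact isAdmissible_nil
  | succ j ih => exact hQ.isAdmissible_append ih (hg j)

theorem mem_betaShift_of_isAdmissible_concat {w s : Seq3} {g : ℕ → List (Fin 3)}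
    (hg : ∀ j, g j ≠ []) (hadm : ∀ j, IsAdmissible {u | IsBelow u w} (concat g j))
    (hs : ∀ j, concat g j = prefixWord s (concat g j).length) : s ∈ BetaShift w := by
  intro r
  have hne : (concat g (r + 1)).drop r ≠ [] := by
    rw [Ne, List.drop_eq_nil_iff, not_le]
    exact le_length_concat hg (r + 1)
  have hbelow : IsBelow ((concat g (r + 1)).drop r) w :=
    hadm (r + 1) _ (List.drop_suffix r _) hne
  rw [hs (r + 1), drop_prefixWord] at hbelow
  exact lexLe_of_isBelow_prefixWord hbelow

end Concat

section Discrepancy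

/-- The deviation of the digit counts of `u` from those predicted by the frequencies `x`. -/
def discrepancy (x : Fin 3 → ℝ) (u : List (Fin 3)) : Fin 3 → ℝ := digitCount u - (u.length : ℝ) • x

variable {x : Fin 3 → ℝ} {g : ℕ → List (Fin 3)}

theorem discrepancy_append (x : Fin 3 → ℝ) (u v : List (Fin 3)) :
    discrepancy x (u ++ v) = discrepancy x u + discrepancy x v := by
  rw [discrepancy, discrepancy, discrepancy, digitCount_append, List.length_append]
  push_cast
  module

theorem discrepancy_concat (x : Fin 3 → ℝ) (g : ℕ → List (Fin 3)) (j : ℕ) :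
    discrepancy x (concat g j) = ∑ i ∈ Finset.range j, discrepancy x (g i) := by
  induction j with
  | zero => simp [concat, discrepancy, digitCount_nil]
  | succ j ih => rw [concat, discrepancy_append, ih, Finset.sum_range_succ]

theorem norm_discrepancy_le (x : Fin 3 → ℝ) (u : List (Fin 3)) :
    ‖discrepancy x u‖ ≤ (1 + ‖x‖) * u.length := by
  have hcount : ‖digitCount u‖ ≤ u.length := by
    refine (pi_norm_le_iff_of_nonneg (Nat.cast_nonneg _)).2 fun i => ?_
    rw [digitCount, Real.norm_natCast]
    exact_mod_cast List.count_le_length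
  calc ‖discrepancy x u‖ ≤ ‖digitCount u‖ + ‖(u.length : ℝ) • x‖ := norm_sub_le _ _
    _ ≤ u.length + u.length * ‖x‖ := by rw [norm_smul, Real.norm_natCast]; gcongr
    _ = (1 + ‖x‖) * u.length := by ring

theorem discrepancy_eq_smul_normalize_sub (x : Fin 3 → ℝ) {u : List (Fin 3)} (hu : u ≠ []) :
    discrepancy x u = (u.length : ℝ) • (normalize (digitCount u) - x) := by
  have hlen : (u.length : ℝ) ≠ 0 := by simpa using hu
  rw [discrepancy, smul_sub, normalize, coordSum_digitCount, smul_inv_smul₀ hlen]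

theorem isLittleO_discrepancy_concat (hg : ∀ j, g j ≠ [])
    (hlim : Tendsto (fun j => normalize (digitCount (g j))) atTop (𝓝 x)) :
    (fun j => discrepancy x (concat g j)) =o[atTop] fun j => ((concat g j).length : ℝ) := by
  have hterm : (fun j => discrepancy x (g j)) =o[atTop] fun j => ((g j).length : ℝ) := by
    have hzero := (Asymptotics.isLittleO_one_iff ℝ).2 (tendsto_sub_nhds_zero_iff.2 hlim)
    simpa only [discrepancy_eq_smul_normalize_sub x (hg _), smul_eq_mul, mul_one] using
      (Asymptotics.isBigO_refl (fun j => ((g j).length : ℝ)) atTop).smul_isLittleO hzero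
  have htop : Tendsto (fun j => ((concat g j).length : ℝ)) atTop atTop :=
    tendsto_natCast_atTop_atTop.comp (tendsto_atTop_mono (le_length_concat hg) tendsto_id)
  simp only [discrepancy_concat, length_concat, Nat.cast_sum] at htop ⊢
  exact hterm.sum_range (fun j => Nat.cast_nonneg _) htop

theorem hasFreq_of_isLittleO_discrepancy {s : Seq3}
    (h : (fun r => discrepancy x (prefixWord s r)) =o[atTop] fun r : ℕ => (r : ℝ)) :
    hasFreq s x := by
  refine tendsto_sub_nhds_zero_iff.1 (h.tendsto_inv_smul_nhds_zero.congr' ?_)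
  filter_upwards [eventually_gt_atTop 0] with r hr
  have hr' : (r : ℝ) ≠ 0 := by exact_mod_cast hr.ne'
  rw [discrepancy, length_prefixWord, digitCount_prefixWord, smul_sub, inv_smul_smul₀ hr']

theorem isLittleO_natCast_of_sq_le {f : ℕ → ℕ} (hf : ∀ r, f r ^ 2 ≤ r + 1) :
    (fun r => (f r : ℝ)) =o[atTop] fun r : ℕ => (r : ℝ) := by
  refine Asymptotics.IsLittleO.of_pow (n := 2) ?_ two_ne_zero
  have hbound : (fun r => (f r : ℝ) ^ 2) =O[atTop] fun r : ℕ => (r : ℝ) := by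
    refine Asymptotics.IsBigO.of_bound 2 ((eventually_ge_atTop 1).mono fun r hr => ?_)
    have hfr : (f r : ℝ) ^ 2 ≤ r + 1 := by exact_mod_cast hf r
    have hr' : (1 : ℝ) ≤ r := by exact_mod_cast hr
    rw [norm_pow, Real.norm_natCast, Real.norm_natCast]
    linarith
  refine hbound.trans_isLittleO ?_
  simpa [Function.comp_def, Pi.pow_def] using
    (Asymptotics.isLittleO_pow_pow_atTop_of_lt (𝕜 := ℝ) one_lt_two).comp_tendsto
      tendsto_natCast_atTop_atTop

-- The last word may be cut short, which does not matter as long as the words grow slowly.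
theorem hasFreq_of_forall_concat_eq_prefixWord {s : Seq3} (hg : ∀ j, g j ≠ [])
    (hlen : ∀ j, (g j).length ^ 2 ≤ j + 1)
    (hlim : Tendsto (fun j => normalize (digitCount (g j))) atTop (𝓝 x))
    (hs : ∀ j, concat g j = prefixWord s (concat g j).length) : hasFreq s x := by
  have hsplit : ∀ r, ∃ j ≤ r, ∃ v, v <+: g j ∧ prefixWord s r = concat g j ++ v := fun r =>
    exists_eq_concat_append_of_isPrefix
      (hs r ▸ prefixWord_isPrefix s (le_length_concat hg r))
  choose j hjr v hv hsplit using hsplit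
  have hlength : ∀ r, r = (concat g (j r)).length + (v r).length := fun r => by
    rw [← List.length_append, ← hsplit, length_prefixWord]
  have hj : Tendsto j atTop atTop := tendsto_atTop.2 fun m => by
    filter_upwards [eventually_gt_atTop (concat g m).length] with r hr
    by_contra! hlt
    have hle : r ≤ (concat g (j r + 1)).length := by
      rw [concat, List.length_append]
      exact (hlength r).trans_le (Nat.add_le_add_left (hv r).length_le _)
    exact absurd (hle.trans (concat_isPrefix hlt).length_le) hr.not_ge
  have hmain : (fun r => discrepancy x (concat g (j r))) =o[atTop] fun r : ℕ => (r : ℝ) := by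
    refine ((isLittleO_discrepancy_concat hg hlim).comp_tendsto hj).trans_isBigO ?_
    refine Asymptotics.IsBigO.of_norm_le fun r => ?_
    simpa using (hlength r).ge.trans' (Nat.le_add_right _ _)
  have hrest : (fun r => discrepancy x (v r)) =o[atTop] fun r : ℕ => (r : ℝ) := by
    refine (Asymptotics.IsBigO.of_bound (1 + ‖x‖) (g := fun r => ((v r).length : ℝ))
      (.of_forall fun r => ?_)).trans_isLittleO (isLittleO_natCast_of_sq_le fun r => ?_)
    · simpa using norm_discrepancy_le x (v r)
    · calc (v r).length ^ 2 ≤ (g (j r)).length ^ 2 := Nat.pow_le_pow_left (hv r).length_le 2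
        _ ≤ j r + 1 := hlen (j r)
        _ ≤ r + 1 := Nat.succ_le_succ (hjr r)
  refine hasFreq_of_isLittleO_discrepancy ((hmain.add hrest).congr_left fun r => ?_)
  rw [hsplit, discrepancy_append]

end Discrepancy

theorem exists_seq_tendsto_of_mem_closure_image {α X : Type*} [PseudoMetricSpace X] {f : α → X}
    {S : Set α} {size : α → ℕ} (hfin : ∀ n, {a | size a ≤ n}.Finite) {a₀ : α} (ha₀ : a₀ ∈ S)
    {x : X} (hx : x ∈ closure (f '' S)) :
    ∃ g : ℕ → α, (∀ j, g j ∈ S ∧ size (g j) ≤ j + size a₀) ∧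
      Tendsto (fun j => f (g j)) atTop (𝓝 x) := by
  have hmin : ∀ j, ∃ a ∈ S ∩ {a | size a ≤ j + size a₀},
      ∀ b ∈ S ∩ {a | size a ≤ j + size a₀}, dist (f a) x ≤ dist (f b) x := fun j =>
    Set.exists_min_image _ _ ((hfin _).inter_of_right S) ⟨a₀, ha₀, Nat.le_add_left _ _⟩
  choose g hg hg_min using hmin
  refine ⟨g, hg, Metric.tendsto_atTop.2 fun ε hε => ?_⟩
  obtain ⟨_, ⟨b, hb, rfl⟩, hbx⟩ := Metric.mem_closure_iff.1 hx ε hε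
  refine ⟨size b, fun j hj => ?_⟩
  calc dist (f (g j)) x ≤ dist (f b) x := hg_min j b ⟨hb, hj.trans (Nat.le_add_right _ _)⟩
    _ < ε := by rwa [dist_comm]

theorem closure_wordFreqSet_subset_DF {w : Seq3} (hw : w 0 = 2) :
    closure (wordFreqSet {u | IsBelow u w}) ⊆ DF w := by
  intro x hx
  have hQ := isWordCut_isBelow hw
  have hone : [1] ∈ {u | IsAdmissible {u | IsBelow u w} u ∧ u ≠ []} :=
    ⟨isAdmissible_cons.2 ⟨hQ.one_mem, isAdmissible_nil⟩, List.cons_ne_nil 1 []⟩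
  have hfin : ∀ n, {u : List (Fin 3) | u.length ^ 2 ≤ n}.Finite := fun n =>
    (List.finite_length_le (Fin 3) n).subset fun u hu => (Nat.le_self_pow two_ne_zero _).trans hu
  obtain ⟨g, hg, hlim⟩ := exists_seq_tendsto_of_mem_closure_image hfin hone hx
  have hne : ∀ j, g j ≠ [] := fun j => (hg j).1.2
  obtain ⟨s, hs⟩ := exists_forall_concat_eq_prefixWord hne
  have hadm := isAdmissible_concat hQ fun j => (hg j).1.1
  exact ⟨s, mem_betaShift_of_isAdmissible_concat hne hadm hs,
    hasFreq_of_forall_concat_eq_prefixWord hne (fun j => (hg j).2) hlim hs⟩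

theorem DF_eq_closure_wordFreqSet {w : Seq3} (hw : w 0 = 2) :
    DF w = closure (wordFreqSet {u | IsBelow u w}) :=
  (DF_subset_closure_wordFreqSet hw).antisymm (closure_wordFreqSet_subset_DF hw)

section Trichotomy

variable {n : ℕ → ℕ}

theorem segment_subset_intrinsicFrontier_freqBody (hn : ∃ᶠ k in atTop, n k ≠ 0) {a b : Fin 3 → ℝ}
    (ha : a ∈ limitFace n) (hb : b ∈ limitFace n) :
    segment ℝ a b ⊆ intrinsicFrontier ℝ (freqBody n) :=
  ((convex_limitFace n).segment_subset ha hb).trans <|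
    subset_intrinsicFrontier_of_isExtreme (isExtreme_limitFace hn)
      ⟨vertex n 0, vertex_mem_freqBody n 0, vertex_notMem_limitFace n 0⟩

theorem exists_accPt_extremePoints_freqBody (hn : ∃ᶠ k in atTop, n k ≠ 0) :
    ∃ v₁ ∈ (freqBody n).extremePoints ℝ, ∃ v₂ ∈ (freqBody n).extremePoints ℝ,
      (∀ v, AccPt v (𝓟 ((freqBody n).extremePoints ℝ)) ↔ v = v₁ ∨ v = v₂) ∧
      ¬ IsRat v₁ ∧ ¬ IsRat v₂ ∧
      (∀ u ∈ (freqBody n).extremePoints ℝ \ {v₁, v₂}, IsRat u ∧ IsPolygonalVertex (freqBody n) u) ∧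
      segment ℝ v₁ v₂ ⊆ intrinsicFrontier ℝ (freqBody n) := by
  obtain ⟨v₁, hv₁, v₂, hv₂, hlim, hacc⟩ := exists_limitFace_tendsto_accPt_iff hn
  have hE := extremePoints_freqBody_inter_limitFace hn hv₁ hv₂ hlim
  refine ⟨v₁, (hE.superset (.inl rfl)).2, v₂, (hE.superset (.inr rfl)).2, hacc,
    not_isRat_of_mem_limitFace hn hv₁, not_isRat_of_mem_limitFace hn hv₂, ?_,
    segment_subset_intrinsicFrontier_freqBody hn hv₁ hv₂⟩
  rintro u ⟨hu, hne⟩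
  exact isRat_and_isPolygonalVertex_of_notMem_limitFace hu fun hface => hne (hE.subset ⟨hface, hu⟩)

theorem DF_isRationalPolytope_or_eq_freqBody {w : Seq3} (hw : w 0 = 2) :
    IsRationalPolytope (DF w) ∨ ∃ n : ℕ → ℕ, (∃ᶠ k in atTop, n k ≠ 0) ∧ DF w = freqBody n := by
  rw [DF_eq_closure_wordFreqSet hw]
  exact isRationalPolytope_or_closure_wordFreqSet_eq_freqBody (isWordCut_isBelow hw)

end Trichotomy

end DigitFrequency

open DigitFrequency in
theorem stmt8_general (w : Seq3) (hw : w 0 = 2) :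
    ∀ Λ : Set (Fin 3 → ℝ), Λ = DF w →
    ∀ E : Set (Fin 3 → ℝ), E = Set.extremePoints ℝ Λ →
    ((∃ F : Finset (Fin 3 → ℝ), (∀ v ∈ F, IsRat v) ∧ Λ = convexHull ℝ (F : Set (Fin 3 → ℝ)))
        ∨
      (E.Infinite ∧ ∃ v, AccPt v (Filter.principal E) ∧
        (∀ v', AccPt v' (Filter.principal E) → v' = v) ∧
        v ∈ E ∧ ¬ IsRat v ∧
        ∀ u ∈ E \ {v}, IsRat u ∧ IsPolygonalVertex Λ u)
        ∨
      (E.Infinite ∧ ∃ v₁ v₂, v₁ ≠ v₂ ∧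
        AccPt v₁ (Filter.principal E) ∧ AccPt v₂ (Filter.principal E) ∧
        (∀ v', AccPt v' (Filter.principal E) → v' = v₁ ∨ v' = v₂) ∧
        v₁ ∈ E ∧ v₂ ∈ E ∧ ¬ IsRat v₁ ∧ ¬ IsRat v₂ ∧
        (∀ u ∈ E \ {v₁, v₂}, IsRat u ∧ IsPolygonalVertex Λ u) ∧
        segment ℝ v₁ v₂ ⊆ intrinsicFrontier ℝ Λ))
    ∧
    ¬ ((∃ F : Finset (Fin 3 → ℝ), (∀ v ∈ F, IsRat v) ∧
          Λ = convexHull ℝ (F : Set (Fin 3 → ℝ))) ∧ E.Infinite)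
    ∧
    ¬ ((∃ v, AccPt v (Filter.principal E) ∧ ∀ v', AccPt v' (Filter.principal E) → v' = v) ∧
        (∃ v₁ v₂, v₁ ≠ v₂ ∧ AccPt v₁ (Filter.principal E) ∧ AccPt v₂ (Filter.principal E))) := by
  rintro _ rfl _ rfl
  refine ⟨?_, fun ⟨hpoly, hinf⟩ => hinf (IsRationalPolytope.finite_extremePoints hpoly),
    fun ⟨⟨v, _, huniq⟩, v₁, v₂, hne, hv₁, hv₂⟩ => hne ((huniq v₁ hv₁).trans (huniq v₂ hv₂).symm)⟩
  obtain hpoly | ⟨n, hn, hDF⟩ := DF_isRationalPolytope_or_eq_freqBody hw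
  · exact .inl hpoly
  rw [hDF]
  obtain ⟨v₁, hv₁, v₂, hv₂, hacc, hirr₁, hirr₂, hvertex, hseg⟩ :=
    exists_accPt_extremePoints_freqBody hn
  have hacc₁ := (hacc v₁).2 (.inl rfl)
  have hacc₂ := (hacc v₂).2 (.inr rfl)
  have hinf := Set.Infinite.of_accPt hacc₁
  rcases eq_or_ne v₁ v₂ with rfl | hne
  · simp only [or_self, Set.pair_eq_singleton] at hacc hvertex
    exact .inr <| .inl ⟨hinf, v₁, hacc₁, fun v => (hacc v).1, hv₁, hirr₁, hvertex⟩
  · exact .inr <| .inr ⟨hinf, v₁, v₂, hne, hacc₁, hacc₂, fun v => (hacc v).1, hv₁, hv₂,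
      hirr₁, hirr₂, hvertex, hseg⟩

/-- For every `w ∈ Max`, exactly one of three alternatives holds for
`Λ = DF(w)`: (1) `Λ` is the convex hull of a finite rational set; (2) the extreme
points of `Λ` are infinite with a single accumulation point, which is an irrational
extreme point, all other extreme points being rational polygonal vertices; (3) the
extreme points are infinite with exactly two accumulation points, both irrational
extreme points, all other extreme points being rational polygonal vertices, and the
segment joining the two accumulation points lies in the boundary of `Λ` relative to the
plane containing `Δ` (its intrinsic frontier). -/
theorem stmt8 (w : Seq3) (hw : w ∈ MaxSet) :
    ∀ Λ : Set (Fin 3 → ℝ), Λ = DF w →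
    ∀ E : Set (Fin 3 → ℝ), E = Set.extremePoints ℝ Λ →
    ((∃ F : Finset (Fin 3 → ℝ), (∀ v ∈ F, IsRat v) ∧ Λ = convexHull ℝ (F : Set (Fin 3 → ℝ)))
        ∨
      (E.Infinite ∧ ∃ v, AccPt v (Filter.principal E) ∧
        (∀ v', AccPt v' (Filter.principal E) → v' = v) ∧
        v ∈ E ∧ ¬ IsRat v ∧
        ∀ u ∈ E \ {v}, IsRat u ∧ IsPolygonalVertex Λ u)
        ∨
      (E.Infinite ∧ ∃ v₁ v₂, v₁ ≠ v₂ ∧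
        AccPt v₁ (Filter.principal E) ∧ AccPt v₂ (Filter.principal E) ∧
        (∀ v', AccPt v' (Filter.principal E) → v' = v₁ ∨ v' = v₂) ∧
        v₁ ∈ E ∧ v₂ ∈ E ∧ ¬ IsRat v₁ ∧ ¬ IsRat v₂ ∧
        (∀ u ∈ E \ {v₁, v₂}, IsRat u ∧ IsPolygonalVertex Λ u) ∧
        segment ℝ v₁ v₂ ⊆ intrinsicFrontier ℝ Λ))
    ∧
    ¬ ((∃ F : Finset (Fin 3 → ℝ), (∀ v ∈ F, IsRat v) ∧
          Λ = convexHull ℝ (F : Set (Fin 3 → ℝ))) ∧ E.Infinite)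
    ∧
    ¬ ((∃ v, AccPt v (Filter.principal E) ∧ ∀ v', AccPt v' (Filter.principal E) → v' = v) ∧
        (∃ v₁ v₂, v₁ ≠ v₂ ∧ AccPt v₁ (Filter.principal E) ∧ AccPt v₂ (Filter.principal E))) :=
  stmt8_general w hw.1
end
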